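/- arXiv:1804.07673 — 8 statements merged into one kernel-verified Lean document; each statement's English description precedes it below -/
import Mathlib

section
/- For every integer n ≥ 8, if H is a 3-uniform hypergraph on n vertices with exactly b(n) edges that does not contain the Fano plane, then H is isomorphic to the balanced, complete, bipartite hypergraph B_n; that is, there is a partition of the vertex set of H into sets X and Y with ||X|−|Y|| ≤ 1 such that a 3-element vertex set is an edge of H if and only if it intersects both X and Y. -/
/-- A `3`-uniform hypergraph (given by its edge set `E`) contains the Fano plane if
there are seven distinct vertices `v 0, …, v 6` such that the seven triples below
(the lines of the projective plane over `GF(2)`) are all edges. -/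
def ContainsFano {α : Type*} [DecidableEq α] (E : Finset (Finset α)) : Prop :=
  ∃ v : Fin 7 → α, Function.Injective v ∧
    ({v 0, v 1, v 2} : Finset α) ∈ E ∧ ({v 2, v 3, v 4} : Finset α) ∈ E ∧
    ({v 0, v 4, v 5} : Finset α) ∈ E ∧ ({v 0, v 3, v 6} : Finset α) ∈ E ∧
    ({v 2, v 5, v 6} : Finset α) ∈ E ∧ ({v 1, v 4, v 6} : Finset α) ∈ E ∧
    ({v 1, v 3, v 5} : Finset α) ∈ E

/-- `b n = C(n,3) − C(⌊n/2⌋,3) − C(⌈n/2⌉,3)`, the number of edges of the balanced,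
complete, bipartite `3`-uniform hypergraph on `n` vertices. -/
def b (n : ℕ) : ℕ := n.choose 3 - (n / 2).choose 3 - ((n + 1) / 2).choose 3


set_option linter.all false
set_option linter.unusedSectionVars false
set_option linter.unusedVariables false
namespace FanoX
open Finset
variable {V : Type*} [DecidableEq V]

/-- indicator of a 3-uniform hypergraph -/
structure Hyp (h : V → V → V → ℤ) : Prop where
  s1 : ∀ x y z, h x y z = h y x z
  s2 : ∀ x y z, h x y z = h x z y
  d : ∀ x y, h x x y = 0
  v : ∀ x y z, h x y z = 0 ∨ h x y z = 1

def FanoFree (h : V → V → V → ℤ) : Prop :=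
  ∀ v : Fin 7 → V, Function.Injective v →
    h (v 0) (v 1) (v 2) + h (v 2) (v 3) (v 4) + h (v 0) (v 4) (v 5) + h (v 0) (v 3) (v 6)
     + h (v 2) (v 5) (v 6) + h (v 1) (v 4) (v 6) + h (v 1) (v 3) (v 5) ≤ 6

def T (h : V → V → V → ℤ) (W : Finset V) : ℤ := ∑ x ∈ W, ∑ y ∈ W, ∑ z ∈ W, h x y z
def D (h : V → V → V → ℤ) (W : Finset V) (z : V) : ℤ := ∑ x ∈ W, ∑ y ∈ W, h z x y
def wt (h : V → V → V → ℤ) (A : Finset V) (x y : V) : ℤ := ∑ s ∈ A, h s x y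
def U (w : V → V → ℤ) (W : Finset V) : ℤ := ∑ x ∈ W, ∑ y ∈ W, w x y

structure Wt (w : V → V → ℤ) : Prop where
  s : ∀ x y, w x y = w y x
  d : ∀ x, w x x = 0

lemma U_insert {w : V → V → ℤ} (hw : Wt w) {W : Finset V} {v : V} (hv : v ∉ W) :
    U w (insert v W) = U w W + 2 * ∑ y ∈ W, w v y := by
  unfold U
  simp only [sum_insert hv, sum_add_distrib, hw.d]
  have : ∑ x ∈ W, w x v = ∑ x ∈ W, w v x := sum_congr rfl fun x _ => hw.s _ _
  rw [this]; ring

lemma U_erase {w : V → V → ℤ} (hw : Wt w) {W : Finset V} {v : V} (hv : v ∈ W) :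
    U w W = U w (W.erase v) + 2 * ∑ y ∈ W, w v y := by
  conv_lhs => rw [← insert_erase hv, U_insert hw (notMem_erase v W)]
  rw [← add_sum_erase W _ hv, hw.d]; ring

lemma U_avg {w : V → V → ℤ} (hw : Wt w) (W : Finset V) :
    ∑ v ∈ W, U w (W.erase v) = ((W.card : ℤ) - 2) * U w W := by
  have : ∀ v ∈ W, U w (W.erase v) = U w W - 2 * ∑ y ∈ W, w v y := fun v hv => by
    rw [U_erase hw hv]; ring
  rw [sum_congr rfl this, sum_sub_distrib, ← mul_sum]
  simp only [sum_const, nsmul_eq_mul]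
  unfold U; ring

lemma U_le {w : V → V → ℤ} (hw : Wt w) {W : Finset V} {c : ℤ}
    (h : ∀ x ∈ W, ∀ y ∈ W, x ≠ y → w x y ≤ c) : U w W ≤ c * (W.card * (W.card - 1)) := by
  induction W using Finset.induction_on with
  | empty => simp [U]
  | insert v W hv ih =>
    rw [U_insert hw hv, card_insert_of_notMem hv]
    have h1 := ih (fun x hx y hy => h x (mem_insert_of_mem hx) y (mem_insert_of_mem hy))
    have h2 : ∑ y ∈ W, w v y ≤ ∑ y ∈ W, c := sum_le_sum fun y hy =>
      h v (mem_insert_self _ _) y (mem_insert_of_mem hy) (by rintro rfl; exact hv hy)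
    simp only [sum_const, nsmul_eq_mul] at h2
    push_cast; nlinarith

section
variable {h : V → V → V → ℤ} (H : Hyp h)
include H

lemma Hyp.nn (x y z : V) : 0 ≤ h x y z := by rcases H.v x y z with h | h <;> omega
lemma Hyp.le1 (x y z : V) : h x y z ≤ 1 := by rcases H.v x y z with h | h <;> omega
lemma Hyp.d2 (x y : V) : h x y x = 0 := by rw [H.s2, H.d]
lemma Hyp.d3 (x y : V) : h x y y = 0 := by rw [H.s1, H.s2, H.d]

lemma Hyp.wtA (A : Finset V) : Wt (wt h A) where
  s x y := sum_congr rfl fun s _ => H.s2 _ _ _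
  d x := sum_eq_zero fun s _ => H.d3 _ _

lemma Hyp.wtD (z : V) : Wt (h z) where
  s x y := H.s2 _ _ _
  d x := H.d3 _ _

lemma D_insert {W : Finset V} {v : V} (hv : v ∉ W) (z : V) :
    D h (insert v W) z = D h W z + 2 * wt h W v z := by
  have := U_insert (H.wtD z) hv
  unfold D; unfold U at this; rw [this, wt]
  congr 2
  exact sum_congr rfl fun s _ => by rw [H.s1, H.s2, H.s1]; first | done | rw [H.s2]

lemma T_insert {W : Finset V} {v : V} (hv : v ∉ W) :
    T h (insert v W) = T h W + 3 * D h W v := by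
  unfold T D
  simp only [sum_insert hv, sum_add_distrib, H.d, H.d2, H.d3]
  have e1 : ∑ x ∈ W, ∑ y ∈ W, h x v y = ∑ x ∈ W, ∑ y ∈ W, h v x y :=
    sum_congr rfl fun x _ => sum_congr rfl fun y _ => H.s1 _ _ _
  have e2 : ∑ x ∈ W, ∑ y ∈ W, h x y v = ∑ x ∈ W, ∑ y ∈ W, h v x y :=
    sum_congr rfl fun x _ => sum_congr rfl fun y _ => by rw [H.s2, H.s1]
  rw [e1, e2]; simp; ring

lemma T_erase {W : Finset V} {v : V} (hv : v ∈ W) :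
    T h W = T h (W.erase v) + 3 * D h W v := by
  have h1 := T_insert H (notMem_erase v W)
  have h2 := D_insert H (notMem_erase v W) v
  rw [insert_erase hv] at h1 h2
  have : wt h (W.erase v) v v = 0 := (H.wtA _).d v
  rw [h1, h2, this]; ring

lemma T_avg (W : Finset V) :
    ∑ v ∈ W, T h (W.erase v) = ((W.card : ℤ) - 3) * T h W := by
  have : ∀ v ∈ W, T h (W.erase v) = T h W - 3 * D h W v := fun v hv => by
    rw [T_erase H hv]; ring
  rw [sum_congr rfl this, sum_sub_distrib, ← mul_sum]
  simp only [sum_const, nsmul_eq_mul]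
  unfold T D; ring

lemma D_even (W : Finset V) (z : V) : (2:ℤ) ∣ D h W z := by
  induction W using Finset.induction_on with
  | empty => simp [D]
  | insert v W hv ih => rw [D_insert H hv]; omega

lemma T_dvd (W : Finset V) : (6:ℤ) ∣ T h W := by
  induction W using Finset.induction_on with
  | empty => simp [T]
  | insert v W hv ih => rw [T_insert H hv]; have := D_even H W v; omega

lemma wt_le (A : Finset V) (x y : V) : wt h A x y ≤ A.card := by
  have : wt h A x y ≤ ∑ s ∈ A, 1 := sum_le_sum fun s _ => H.le1 _ _ _
  simpa using this

lemma wt_nn (A : Finset V) (x y : V) : 0 ≤ wt h A x y := sum_nonneg fun s _ => H.nn _ _ _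

lemma D_le (W : Finset V) (z : V) : D h W z ≤ W.card * (W.card - 1) := by
  have := U_le (H.wtD z) (W := W) (c := 1) (fun x _ y _ _ => H.le1 _ _ _)
  unfold D; unfold U at this; linarith

lemma T_le (W : Finset V) : T h W ≤ W.card * (W.card - 1) * (W.card - 2) := by
  induction W using Finset.induction_on with
  | empty => simp [T]
  | insert v W hv ih =>
    rw [T_insert H hv, card_insert_of_notMem hv]; have := D_le H W v; push_cast; nlinarith

lemma T_union {A B : Finset V} (hd : Disjoint A B) :
    T h (A ∪ B) = T h A + 3 * ∑ z ∈ B, D h A z + 3 * U (wt h A) B + T h B := by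
  induction B using Finset.induction_on with
  | empty => simp [T, U]
  | insert v B hv ih =>
    rw [disjoint_insert_right] at hd
    have hv' : v ∉ A ∪ B := by simp [hd.1, hv]
    rw [union_insert, T_insert H hv', ih hd.2, T_insert H hv, sum_insert hv,
      U_insert (H.wtA A) hv]
    have : D h (A ∪ B) v = D h A v + 2 * ∑ y ∈ B, wt h A v y + D h B v := by
      unfold D wt
      simp only [sum_union hd.2, sum_add_distrib]
      have e1 : ∑ x ∈ A, ∑ y ∈ B, h v x y = ∑ y ∈ B, ∑ x ∈ A, h x v y := by
        rw [sum_comm]; exact sum_congr rfl fun x _ => sum_congr rfl fun y _ => H.s1 _ _ _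
      have e2 : ∑ x ∈ B, ∑ y ∈ A, h v x y = ∑ y ∈ B, ∑ x ∈ A, h x v y := by
        exact sum_congr rfl fun x _ => sum_congr rfl fun y _ => by rw [H.s2, H.s1]
      rw [e1, e2]; ring
    rw [this]; ring

end

def Clique (h : V → V → V → ℤ) (S : Finset V) : Prop :=
  ∀ x ∈ S, ∀ y ∈ S, ∀ z ∈ S, x ≠ y → x ≠ z → y ≠ z → h x y z = 1

section
variable {h : V → V → V → ℤ} (H : Hyp h)
include H

lemma T_clique {S : Finset V} (hS : Clique h S) :
    T h S = S.card * (S.card - 1) * (S.card - 2) := by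
  induction S using Finset.induction_on with
  | empty => simp [T]
  | insert v W hv ih =>
    have h1 := ih (fun x hx y hy z hz => hS x (mem_insert_of_mem hx) y (mem_insert_of_mem hy)
      z (mem_insert_of_mem hz))
    have h2 : U (h v) W = W.card * (W.card - 1) := by
      apply le_antisymm
      · have := U_le (H.wtD v) (W := W) (c := 1) (fun x _ y _ _ => H.le1 _ _ _); linarith
      · have := U_le (w := fun x y => - h v x y) ⟨fun x y => by rw [(H.wtD v).s],
          fun x => by rw [(H.wtD v).d]; rfl⟩ (W := W) (c := -1) (fun x hx y hy hxy => by
            rw [hS v (mem_insert_self _ _) x (mem_insert_of_mem hx) y (mem_insert_of_mem hy)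
              (by rintro rfl; exact hv hx) (by rintro rfl; exact hv hy) hxy])
        simp only [U, sum_neg_distrib] at this
        unfold U; linarith
    rw [T_insert H hv, card_insert_of_notMem hv, h1]
    have h3 : D h W v = U (h v) W := rfl
    rw [h3, h2]; push_cast; ring

lemma T_insert3 {x y z : V} (W : Finset V) (hxy : x ≠ y) (hxz : x ≠ z) (hyz : y ≠ z)
    (hx : x ∉ W) (hy : y ∉ W) (hz : z ∉ W) (h0 : h x y z = 0) :
    T h (insert x (insert y (insert z W))) ≤
      ((W.card + 3 : ℤ) * (W.card + 2) * (W.card + 1)) - 6 := by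
  rw [T_insert H (by simp [*]), D_insert H (by simp [*]), T_insert H (by simp [*])]
  have a1 := T_le H (insert z W)
  have a2 := D_le H (insert z W) y
  have a3 := D_le H (insert z W) x
  rw [card_insert_of_notMem hz] at a1 a2 a3
  have a4 : wt h (insert z W) y x ≤ W.card := by
    rw [wt, sum_insert hz]
    have := wt_le H W y x
    have e : h z y x = 0 := by rw [H.s2, H.s1, H.s2, h0]
    rw [e]; simpa [wt] using this
  push_cast at *
  nlinarith

lemma T_not_clique {S : Finset V} (hS : ¬ Clique h S) :
    T h S ≤ S.card * (S.card - 1) * (S.card - 2) - 6 := by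
  unfold Clique at hS
  push Not at hS
  obtain ⟨x, hx, y, hy, z, hz, hxy, hxz, hyz, h1⟩ := hS
  have h0 : h x y z = 0 := by rcases H.v x y z with h | h; exact h; exact absurd h h1
  set W := ((S.erase x).erase y).erase z with hW
  have e1 : insert z W = (S.erase x).erase y := insert_erase (by simp [*, Ne.symm])
  have e2 : insert y (insert z W) = S.erase x := by
    rw [e1]; exact insert_erase (by simp [*, hxy.symm])
  have e3 : insert x (insert y (insert z W)) = S := by rw [e2]; exact insert_erase hx
  have hzW : z ∉ W := by simp [hW]
  have hyW : y ∉ W := by simp [hW]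
  have hxW : x ∉ W := by simp [hW]
  have := T_insert3 H W hxy hxz hyz hxW hyW hzW h0
  have hc : S.card = W.card + 3 := by
    rw [← e3, card_insert_of_notMem (by simp [*]), card_insert_of_notMem (by simp [*]),
      card_insert_of_notMem hzW]
  rw [e3] at this
  rw [hc]; push_cast; linarith

end
end FanoX


set_option linter.all false
set_option linter.unusedSectionVars false
set_option linter.unusedVariables false
namespace FanoX
open Finset
variable {V : Type*} [DecidableEq V]

/-- matching condition -/
def NC (k : ℤ) (w : V → V → ℤ) : Prop := ∀ x y z u : V, x ≠ y → x ≠ z → x ≠ u → y ≠ z → y ≠ u →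
  z ≠ u →
  (w x y + w z u ≤ k ∨ w x z + w y u ≤ k ∨ w x u + w y z ≤ k) ∨
  (w x y + w z u ≤ k + 1 ∧ w x z + w y u ≤ k + 1) ∨
  (w x y + w z u ≤ k + 1 ∧ w x u + w y z ≤ k + 1) ∨
  (w x z + w y u ≤ k + 1 ∧ w x u + w y z ≤ k + 1) ∨
  (w x y + w z u ≤ k + 2 ∧ w x z + w y u ≤ k + 2 ∧ w x u + w y z ≤ k + 2)

def F (m : ℕ) : ℤ := 3 * m ^ 2 - 2 * m - (m % 2 : ℕ)

lemma F_even (k : ℕ) : F (2 * k) = 12 * (k:ℤ) ^ 2 - 4 * k := by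
  unfold F
  have : 2 * k % 2 = 0 := by omega
  rw [this]; push_cast; ring
lemma F_odd (k : ℕ) : F (2 * k + 1) = 12 * (k:ℤ) ^ 2 + 8 * k := by
  unfold F
  have : (2 * k + 1) % 2 = 1 := by omega
  rw [this]; push_cast; ring

lemma F_step2 (m : ℕ) : F (m + 2) = F m + 8 + 12 * m := by
  unfold F
  have : (m + 2) % 2 = m % 2 := by omega
  rw [this]; push_cast; ring

lemma link_a {w : V → V → ℤ} (hw : Wt w) (h4 : ∀ x y, w x y ≤ 4) (n : ℕ) : ∀ (W : Finset V),
    W.card = n → (∀ x ∈ W, ∀ y ∈ W, ∀ z ∈ W, x ≠ y → x ≠ z → y ≠ z → w x y + w x z + w y z ≤ 10) →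
    U w W ≤ F n := by
  induction n using Nat.strong_induction_on with
  | _ n ih =>
  intro W hc ht
  by_cases hex : ∃ x ∈ W, ∃ y ∈ W, w x y = 4
  · obtain ⟨x, hx, y, hy, hxy4⟩ := hex
    have hxy : x ≠ y := by rintro rfl; rw [hw.d] at hxy4; omega
    set W' := (W.erase x).erase y with hW'
    have hyx : y ∈ W.erase x := by simp [hy, hxy.symm]
    have e1 : insert y W' = W.erase x := insert_erase hyx
    have e2 : insert x (insert y W') = W := by rw [e1]; exact insert_erase hx
    have hyW : y ∉ W' := by simp [hW']
    have hxW : x ∉ W' := by simp [hW']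
    have hc' : W'.card + 2 = n := by
      rw [← hc, ← e2, card_insert_of_notMem (by simp [*]), card_insert_of_notMem hyW]
    have hsub : ∀ z ∈ W', z ∈ W := fun z hz => by rw [hW'] at hz; simp at hz; exact hz.2.2
    have i1 := ih W'.card (by omega) W' rfl (fun a ha b hb c hc => ht a (hsub a ha) b (hsub b hb)
      c (hsub c hc))
    have e3 : U w W = U w W' + 2 * ∑ z ∈ W', w y z + 2 * (w x y + ∑ z ∈ W', w x z) := by
      conv_lhs => rw [← e2]
      rw [U_insert hw (by simp [*]), U_insert hw hyW, sum_insert hyW]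
    have e4 : ∑ z ∈ W', (w x z + w y z) ≤ ∑ z ∈ W', 6 := sum_le_sum fun z hz => by
      have := ht x hx y hy z (hsub z hz) hxy (by rintro rfl; exact hxW hz)
        (by rintro rfl; exact hyW hz)
      omega
    rw [sum_add_distrib] at e4
    simp only [sum_const, nsmul_eq_mul] at e4
    rw [← hc', F_step2]
    linarith
  · push Not at hex
    have := U_le hw (W := W) (c := 3) (fun x hx y hy _ => by
      have := hex x hx y hy; have := h4 x y; omega)
    rw [hc] at this
    unfold F
    have : ((n % 2 : ℕ) : ℤ) ≤ n := by exact_mod_cast Nat.mod_le _ _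
    nlinarith

lemma k4_20 {w : V → V → ℤ} (h4 : ∀ x y, w x y ≤ 4) (hN : NC 4 w)
    {x y z u : V} (hxy : x ≠ y) (hxz : x ≠ z) (hxu : x ≠ u) (hyz : y ≠ z) (hyu : y ≠ u)
    (hzu : z ≠ u) : w x y + w x z + w y z + (w x u + w y u + w z u) ≤ 20 := by
  have := hN x y z u hxy hxz hxu hyz hyu hzu
  have := h4 x y; have := h4 x z; have := h4 x u; have := h4 y z; have := h4 y u; have := h4 z u
  omega

lemma k4_z {w : V → V → ℤ} (h4 : ∀ x y, w x y ≤ 4) (hN : NC 4 w)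
    {x y z u : V} (hxy : x ≠ y) (hxz : x ≠ z) (hxu : x ≠ u) (hyz : y ≠ z) (hyu : y ≠ u)
    (hzu : z ≠ u) (h1 : w x y = 3) (h2 : w x z = 4) (h3 : w y z = 4)
    (h9 : 9 ≤ w x u + w y u + w z u) : w z u ≤ 1 := by
  have := hN x y z u hxy hxz hxu hyz hyu hzu
  have := h4 x y; have := h4 x z; have := h4 x u; have := h4 y z; have := h4 y u; have := h4 z u
  omega

lemma split3 {w : V → V → ℤ} (hw : Wt w) {W : Finset V} {x y z : V} (hx : x ∈ W) (hy : y ∈ W)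
    (hz : z ∈ W) (hxy : x ≠ y) (hxz : x ≠ z) (hyz : y ≠ z) :
    ∃ W' ⊆ W, W'.card + 3 = W.card ∧ x ∉ W' ∧ y ∉ W' ∧ z ∉ W' ∧
      insert x (insert y (insert z W')) = W ∧
      U w W = U w W' + 2 * (w x y + w x z + w y z) + 2 * ∑ u ∈ W', (w x u + w y u + w z u) := by
  set W' := ((W.erase x).erase y).erase z with hW'
  have e1 : insert z W' = (W.erase x).erase y := insert_erase (by simp [*, Ne.symm])
  have e2 : insert y (insert z W') = W.erase x := by
    rw [e1]; exact insert_erase (by simp [*, hxy.symm])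
  have e3 : insert x (insert y (insert z W')) = W := by rw [e2]; exact insert_erase hx
  have hzW : z ∉ W' := by simp [hW']
  have hyW : y ∉ W' := by simp [hW']
  have hxW : x ∉ W' := by simp [hW']
  refine ⟨W', ?_, ?_, hxW, hyW, hzW, e3, ?_⟩
  · intro a ha; rw [hW'] at ha; simp at ha; exact ha.2.2.2
  · rw [← e3, card_insert_of_notMem (by simp [*]), card_insert_of_notMem (by simp [*]),
      card_insert_of_notMem hzW]
  · conv_lhs => rw [← e3]
    rw [U_insert hw (by simp [*]), U_insert hw (by simp [*]), U_insert hw hzW,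
      sum_insert hzW, sum_insert (by simp [*]), sum_insert hzW]
    simp only [sum_add_distrib]; ring

lemma F_3_12 (m : ℕ) (hm : 2 ≤ m) : F m + 24 + 16 * m ≤ F (m + 3) := by
  unfold F
  rcases Nat.even_or_odd' m with ⟨k, rfl | rfl⟩
  · have : (2 * k + 3) % 2 = 1 := by omega
    have : (2 * k) % 2 = 0 := by omega
    simp only [*]; push_cast; push_cast at *; nlinarith
  · have : (2 * k + 1 + 3) % 2 = 0 := by omega
    have : (2 * k + 1) % 2 = 1 := by omega
    simp only [*]; push_cast; push_cast at *; nlinarith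

lemma F_3_11 (m : ℕ) : F m + 22 + 18 * m - 2 ≤ F (m + 3) := by
  unfold F
  rcases Nat.even_or_odd' m with ⟨k, rfl | rfl⟩
  · have : (2 * k + 3) % 2 = 1 := by omega
    have : (2 * k) % 2 = 0 := by omega
    simp only [*]; push_cast; nlinarith
  · have : (2 * k + 1 + 3) % 2 = 0 := by omega
    have : (2 * k + 1) % 2 = 1 := by omega
    simp only [*]; push_cast; nlinarith

lemma F_1 (m : ℕ) (hm : 4 ≤ m) : F m + 2 * (8 + (m - 2)) ≤ F (m + 1) := by
  unfold F
  rcases Nat.even_or_odd' m with ⟨k, rfl | rfl⟩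
  · have : (2 * k + 1) % 2 = 1 := by omega
    have : (2 * k) % 2 = 0 := by omega
    simp only [*]; push_cast; push_cast at *; nlinarith
  · have : (2 * k + 1 + 1) % 2 = 0 := by omega
    have : (2 * k + 1) % 2 = 1 := by omega
    simp only [*]; push_cast; push_cast at *; nlinarith

lemma link_11 {w : V → V → ℤ} (hw : Wt w) (h4 : ∀ x y, w x y ≤ 4) (hN : NC 4 w) (n : ℕ)
    (hn : 5 ≤ n) (hn6 : n ≠ 6) (W : Finset V) (hc : W.card = n)
    (ih : ∀ m < n, m ≠ 3 → ∀ W : Finset V, W.card = m → U w W ≤ F m)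
    {x y z : V} (hx : x ∈ W) (hy : y ∈ W) (hz : z ∈ W) (hxy : x ≠ y) (hxz : x ≠ z) (hyz : y ≠ z)
    (h1 : w x y = 3) (h2 : w x z = 4) (h3 : w y z = 4) : U w W ≤ F n := by
  obtain ⟨W', hs, hc', hxW, hyW, hzW, e, eU⟩ := split3 hw hx hy hz hxy hxz hyz
  have hub : ∀ u ∈ W', w x u + w y u + w z u ≤ 9 := fun u hu => by
    have := k4_20 h4 hN hxy hxz (u := u) (by rintro rfl; exact hxW hu) hyz
      (by rintro rfl; exact hyW hu) (by rintro rfl; exact hzW hu)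
    omega
  by_cases hall : ∀ u ∈ W', 9 ≤ w x u + w y u + w z u
  · have hz1 : ∀ u ∈ W', w z u ≤ 1 := fun u hu => k4_z h4 hN hxy hxz
      (by rintro rfl; exact hxW hu) hyz (by rintro rfl; exact hyW hu)
      (by rintro rfl; exact hzW hu) h1 h2 h3 (hall u hu)
    have eE := U_erase hw hz
    have hce : (W.erase z).card + 1 = n := by rw [card_erase_of_mem hz, hc]; omega
    have i := ih (W.erase z).card (by omega) (by omega) _ rfl
    have es : ∑ u ∈ W, w z u ≤ 8 + W'.card := by
      rw [← e, sum_insert (by simp [*]), sum_insert (by simp [*]), sum_insert hzW, hw.d,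
        hw.s z x, hw.s z y]
      have := sum_le_sum hz1
      simp at this; omega
    have := F_1 (W.erase z).card (by omega)
    rw [hce] at this
    have : ((W.erase z).card : ℤ) = W'.card + 2 := by
      have : (W.erase z).card = W'.card + 2 := by omega
      exact_mod_cast this
    linarith
  · push Not at hall
    obtain ⟨v, hv, hv9⟩ := hall
    have hsum : ∑ u ∈ W', (w x u + w y u + w z u) ≤ 9 * W'.card - 1 := by
      rw [← add_sum_erase W' _ hv]
      have h9 : ∑ u ∈ W'.erase v, (w x u + w y u + w z u) ≤ ∑ u ∈ W'.erase v, 9 :=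
        sum_le_sum fun u hu => hub u (mem_of_mem_erase hu)
      simp only [sum_const, nsmul_eq_mul] at h9
      rw [card_erase_of_mem hv] at h9
      have : 1 ≤ W'.card := card_pos.2 ⟨v, hv⟩
      push_cast [this] at h9
      linarith
    have i := ih W'.card (by omega) (by omega) W' rfl
    have := F_3_11 W'.card
    rw [hc', hc] at this
    linarith

lemma link4 {w : V → V → ℤ} (hw : Wt w) (h4 : ∀ x y, w x y ≤ 4) (hN : NC 4 w) (n : ℕ) :
    n ≠ 3 → ∀ W : Finset V, W.card = n → U w W ≤ F n := by
  induction n using Nat.strong_induction_on with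
  | _ n ih =>
  intro hn3 W hc
  by_cases ht : ∀ x ∈ W, ∀ y ∈ W, ∀ z ∈ W, x ≠ y → x ≠ z → y ≠ z → w x y + w x z + w y z ≤ 10
  · exact link_a hw h4 n W hc ht
  push Not at ht
  obtain ⟨x, hx, y, hy, z, hz, hxy, hxz, hyz, h11⟩ := ht
  obtain ⟨W', hs, hc', hxW, hyW, hzW, e, eU⟩ := split3 hw hx hy hz hxy hxz hyz
  have hub : ∀ u ∈ W', w x y + w x z + w y z + (w x u + w y u + w z u) ≤ 20 := fun u hu => 
    k4_20 h4 hN hxy hxz (u := u) (by rintro rfl; exact hxW hu) hyz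
      (by rintro rfl; exact hyW hu) (by rintro rfl; exact hzW hu)
  by_cases hn4 : n = 4
  · have : W'.card = 1 := by omega
    obtain ⟨u, rfl⟩ := card_eq_one.1 this
    have := hub u (by simp)
    have e0 : U w {u} = 0 := by simp [U, hw.d]
    rw [eU, e0, hn4]; simp only [sum_singleton]
    have : F 4 = 40 := by norm_num [F]
    omega
  by_cases hn6 : n = 6
  · subst hn6
    have := U_avg hw W
    have h5 : ∑ v ∈ W, U w (W.erase v) ≤ ∑ v ∈ W, 64 := sum_le_sum fun v hv => by
      have := ih 5 (by omega) (by omega) (W.erase v) (by rw [card_erase_of_mem hv, hc])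
      have e : F 5 = 64 := by norm_num [F]
      omega
    simp [hc] at h5 this
    have : F 6 = 96 := by norm_num [F]
    omega
  have a1 := h4 x y
  have a2 := h4 x z
  have a3 := h4 y z
  have hn5 : 5 ≤ n := by omega
  by_cases h12 : w x y + w x z + w y z = 12
  · have hsum : ∑ u ∈ W', (w x u + w y u + w z u) ≤ ∑ u ∈ W', 8 :=
        sum_le_sum fun u hu => by have := hub u hu; omega
    simp only [sum_const, nsmul_eq_mul] at hsum
    have i := ih W'.card (by omega) (by omega) W' rfl
    have := F_3_12 W'.card (by omega)
    rw [hc', hc] at this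
    linarith
  have : w x y = 3 ∧ w x z = 4 ∧ w y z = 4 ∨ w x y = 4 ∧ w x z = 3 ∧ w y z = 4 ∨
    w x y = 4 ∧ w x z = 4 ∧ w y z = 3 := by omega
  rcases this with ⟨h1, h2, h3⟩ | ⟨h1, h2, h3⟩ | ⟨h1, h2, h3⟩
  · exact link_11 hw h4 hN n hn5 hn6 W hc ih hx hy hz hxy hxz hyz h1 h2 h3
  · exact link_11 hw h4 hN n hn5 hn6 W hc ih hx hz hy hxz hxy hyz.symm h2 h1 (by rw [hw.s, h3])
  · exact link_11 hw h4 hN n hn5 hn6 W hc ih hy hz hx hyz hxy.symm hxz.symm h3 (by rw [hw.s, h1])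
      (by rw [hw.s, h2])

/-- averaging over 4-subsets -/
lemma quad_avg {w : V → V → ℤ} (hw : Wt w) (a : V → ℤ) (p q r : ℤ) (W0 : Finset V)
    (hQ : ∀ x ∈ W0, ∀ y ∈ W0, ∀ z ∈ W0, ∀ u ∈ W0, x ≠ y → x ≠ z → x ≠ u → y ≠ z → y ≠ u → z ≠ u →
      p * (w x y + w x z + w y z + (w x u + w y u + w z u)) ≤ q * (a x + a y + a z + a u) + r)
    (n : ℕ) (hn : 4 ≤ n) : ∀ W ⊆ W0, W.card = n →
    6 * p * U w W ≤ 4 * q * (n - 1) * ∑ x ∈ W, a x + r * n * (n - 1) := by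
  induction n, hn using Nat.le_induction with
  | base =>
    intro W hW hc
    obtain ⟨x, y, z, u, hxy, hxz, hxu, hyz, hyu, hzu, rfl⟩ := card_eq_four.1 hc
    obtain ⟨W', hs, hc', hxW, hyW, hzW, e, eU⟩ := split3 hw (W := {x, y, z, u}) (x := x) (y := y)
      (z := z) (by simp) (by simp) (by simp) hxy hxz hyz
    have : W' = {u} := by
      have h1 : W'.card = 1 := by omega
      obtain ⟨t, rfl⟩ := card_eq_one.1 h1
      have : t ∈ ({x, y, z, u} : Finset V) := hs (by simp)
      simp at this hxW hyW hzW
      rcases this with h | h | h | h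
      · exact absurd h.symm hxW
      · exact absurd h.symm hyW
      · exact absurd h.symm hzW
      · rw [h]
    subst this
    have e0 : U w {u} = 0 := by simp [U, hw.d]
    have := hQ x (hW (by simp)) y (hW (by simp)) z (hW (by simp)) u (hW (by simp))
      hxy hxz hxu hyz hyu hzu
    rw [eU, e0, sum_insert (by simp [*]), sum_insert (by simp [*]), sum_insert (by simp [*])]
    simp only [sum_singleton]
    push_cast
    linarith
  | succ n hn ih =>
    intro W hW hc
    have i : ∀ v ∈ W, 6 * p * U w (W.erase v) ≤
        4 * q * (n - 1) * (∑ x ∈ W, a x - a v) + r * n * (n - 1) := fun v hv => by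
      have := ih (W.erase v) ((erase_subset _ _).trans hW) (by rw [card_erase_of_mem hv, hc]; rfl)
      rwa [sum_erase_eq_sub hv] at this
    have s := sum_le_sum i
    rw [← mul_sum, U_avg hw, sum_add_distrib, ← mul_sum, sum_sub_distrib] at s
    simp only [sum_const, nsmul_eq_mul, hc] at s
    push_cast at *
    have hp : (0:ℤ) < n - 1 := by have : (4:ℤ) ≤ n := by exact_mod_cast hn
                                  linarith
    refine le_of_mul_le_mul_left ?_ hp
    linarith
end FanoX


set_option linter.all false
set_option linter.unusedSectionVars false
set_option linter.unusedVariables false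
namespace FanoX
open Finset
variable {V : Type*} [DecidableEq V]

def Lines (h : V → V → V → ℤ) (v : Fin 7 → V) : ℤ :=
    h (v 0) (v 1) (v 2) + h (v 2) (v 3) (v 4) + h (v 0) (v 4) (v 5) + h (v 0) (v 3) (v 6)
     + h (v 2) (v 5) (v 6) + h (v 1) (v 4) (v 6) + h (v 1) (v 3) (v 5)

lemma exists_perm (i j k : Fin 7) (hij : i ≠ j) (hik : i ≠ k) (hjk : j ≠ k) :
    ∃ τ : Equiv.Perm (Fin 7), τ 0 = i ∧ τ 1 = j ∧ τ 2 = k := by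
  let f : Fin 3 → Fin 7 := ![0, 1, 2]
  let g : Fin 3 → Fin 7 := ![i, j, k]
  have hf : Function.Injective f := by decide
  have hg : Function.Injective g := by
    intro a b hab
    fin_cases a <;> fin_cases b <;> simp_all [g] <;> (try omega)
  have hp := Equiv.Perm.isMultiplyPretransitive (Fin 7) 3
  obtain ⟨τ, hτ⟩ := hp.exists_smul_eq ⟨f, hf⟩ ⟨g, hg⟩
  refine ⟨τ, ?_, ?_, ?_⟩
  · have := DFunLike.congr_fun hτ 0; simpa [f, g] using this
  · have := DFunLike.congr_fun hτ 1; simpa [f, g] using this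
  · have := DFunLike.congr_fun hτ 2; simpa [f, g] using this

lemma perm_sum (f : Fin 7 → Fin 7 → Fin 7 → ℤ) (hf : Hyp f) (i j k : Fin 7)
    (hij : i ≠ j) (hik : i ≠ k) (hjk : j ≠ k) :
    ∑ σ : Equiv.Perm (Fin 7), f (σ i) (σ j) (σ k) = 24 * T f univ := by
  have key : ∀ i j k : Fin 7, i ≠ j → i ≠ k → j ≠ k →
      ∑ σ : Equiv.Perm (Fin 7), f (σ i) (σ j) (σ k) =
      ∑ σ : Equiv.Perm (Fin 7), f (σ 0) (σ 1) (σ 2) := by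
    intro i j k hij hik hjk
    obtain ⟨τ, rfl, rfl, rfl⟩ := exists_perm i j k hij hik hjk
    exact Equiv.sum_comp (Equiv.mulRight τ) (fun σ => f (σ 0) (σ 1) (σ 2))
  rw [key i j k hij hik hjk]
  set K := ∑ σ : Equiv.Perm (Fin 7), f (σ 0) (σ 1) (σ 2) with hK
  have e1 : ∑ i, ∑ j, ∑ k, ∑ σ : Equiv.Perm (Fin 7), f (σ i) (σ j) (σ k) = 5040 * T f univ := by
    have : ∀ σ : Equiv.Perm (Fin 7), ∑ i, ∑ j, ∑ k, f (σ i) (σ j) (σ k) = T f univ := by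
      intro σ
      unfold T
      rw [← Equiv.sum_comp σ (fun x => ∑ y, ∑ z, f x y z)]
      refine sum_congr rfl fun i _ => ?_
      rw [← Equiv.sum_comp σ (fun y => ∑ z, f (σ i) y z)]
      refine sum_congr rfl fun j _ => ?_
      rw [← Equiv.sum_comp σ (fun z => f (σ i) (σ j) z)]
    calc _ = ∑ σ : Equiv.Perm (Fin 7), ∑ i, ∑ j, ∑ k, f (σ i) (σ j) (σ k) := by
            simp_rw [sum_comm (t := (univ : Finset (Equiv.Perm (Fin 7))))]
            
      _ = ∑ σ : Equiv.Perm (Fin 7), T f univ := sum_congr rfl fun σ _ => this σ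
      _ = _ := by
        rw [sum_const, card_univ, Fintype.card_perm]; simp [Nat.factorial]
  have e2 : ∀ i j k : Fin 7, ∑ σ : Equiv.Perm (Fin 7), f (σ i) (σ j) (σ k) =
      K * (if i ≠ j ∧ i ≠ k ∧ j ≠ k then 1 else 0) := by
    intro i j k
    split_ifs with hh
    · rw [key i j k hh.1 hh.2.1 hh.2.2]; ring
    · have : ∀ σ : Equiv.Perm (Fin 7), f (σ i) (σ j) (σ k) = 0 := by
        intro σ
        by_cases a : i = j
        · rw [a, hf.d]
        by_cases b : i = k
        · rw [b, hf.d2]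
        by_cases c : j = k
        · rw [c, hf.d3]
        exact absurd ⟨a, b, c⟩ hh
      simp [this]
  simp_rw [e2, ← mul_sum] at e1
  have e3 : ∑ i : Fin 7, ∑ j : Fin 7, ∑ k : Fin 7,
    (if i ≠ j ∧ i ≠ k ∧ j ≠ k then (1:ℤ) else 0) = 210 := by decide +kernel
  rw [e3] at e1
  omega

lemma seven_fin (f : Fin 7 → Fin 7 → Fin 7 → ℤ) (hf : Hyp f)
    (hF : FanoFree f) : T f univ ≤ 180 ∧ (T f univ = 180 → Lines f id = 6) := by
  have s : ∑ σ : Equiv.Perm (Fin 7), Lines f σ = 168 * T f univ := by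
    unfold Lines
    simp only [sum_add_distrib]
    rw [perm_sum f hf, perm_sum f hf, perm_sum f hf, perm_sum f hf, perm_sum f hf, perm_sum f hf,
      perm_sum f hf]
    · ring
    all_goals decide
  have le : ∀ σ : Equiv.Perm (Fin 7), Lines f σ ≤ 6 := fun σ => hF σ σ.injective
  have c : ∑ σ : Equiv.Perm (Fin 7), (6:ℤ) = 30240 := by
    rw [sum_const, card_univ, Fintype.card_perm]; simp [Nat.factorial]
  have l := sum_le_sum (s := univ) (fun σ _ => le σ)
  rw [s, c] at l
  refine ⟨by omega, fun h => ?_⟩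
  have e : ∑ σ : Equiv.Perm (Fin 7), Lines f σ = ∑ σ : Equiv.Perm (Fin 7), (6:ℤ) := by
    rw [s, c, h]; norm_num
  have := (sum_eq_sum_iff_of_le (fun σ _ => le σ)).1 e 1 (mem_univ _)
  exact this

section
variable {h : V → V → V → ℤ} (H : Hyp h) (hF : FanoFree h)
include H hF

lemma seven_v (v : Fin 7 → V) (hv : Function.Injective v) :
    T h (univ.image v) ≤ 180 ∧ (T h (univ.image v) = 180 → Lines h v = 6) := by
  have := seven_fin (fun i j k => h (v i) (v j) (v k)) ⟨fun _ _ _ => H.s1 _ _ _,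
    fun _ _ _ => H.s2 _ _ _, fun _ _ => H.d _ _, fun _ _ _ => H.v _ _ _⟩
    (fun u hu => hF (v ∘ u) (hv.comp hu))
  have e : T h (univ.image v) = T (fun i j k => h (v i) (v j) (v k)) univ := by
    unfold T
    simp only [sum_image (fun a _ b _ hab => hv hab)]
  rw [e]; exact this

lemma seven {W : Finset V} (hc : W.card = 7) : T h W ≤ 180 := by
  let e := (Finset.equivFinOfCardEq hc).symm
  have hv : Function.Injective (fun i => (e i : V)) := fun a b hab => e.injective (Subtype.ext hab)
  have : univ.image (fun i => (e i : V)) = W := by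
    ext x; simp only [mem_image, mem_univ, true_and]
    constructor
    · rintro ⟨i, rfl⟩; exact (e i).2
    · intro hx; exact ⟨e.symm ⟨x, hx⟩, by simp⟩
  rw [← this]; exact (seven_v H hF _ hv).1

lemma seven_eq {W : Finset V} (hc : W.card = 7) (hT : T h W = 180) {p a b c d : V}
    (hp : p ∈ W) (ha : a ∈ W) (hb : b ∈ W) (hc' : c ∈ W) (hd : d ∈ W)
    (hn : [p, a, b, c, d].Nodup) (h1 : h p a b = 0) (h2 : h p c d = 0) : False := by
  have hS : ({p, a, b, c, d} : Finset V).card = 5 := by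
    have := List.toFinset_card_of_nodup hn
    simpa using this
  have hsub : ({p, a, b, c, d} : Finset V) ⊆ W := by
    intro x hx; simp at hx; rcases hx with rfl | rfl | rfl | rfl | rfl <;> assumption
  have hr : (W \ {p, a, b, c, d}).card = 2 := by rw [card_sdiff_of_subset hsub, hc, hS]
  obtain ⟨e, f, hef, hW⟩ := card_eq_two.1 hr
  have he : e ∈ W \ {p, a, b, c, d} := by rw [hW]; simp
  have hf : f ∈ W \ {p, a, b, c, d} := by rw [hW]; simp
  simp only [mem_sdiff, mem_insert, mem_singleton, not_or] at he hf
  have hnd : [p, a, b, c, d, e, f].Nodup := by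
    simp only [List.nodup_cons, List.mem_cons, List.not_mem_nil, not_or, or_false] at hn ⊢
    grind
  have hv : Function.Injective ![p, a, b, e, c, d, f] := by
    have : [p, a, b, e, c, d, f].Nodup := by
      simp only [List.nodup_cons, List.mem_cons, List.not_mem_nil, not_or, or_false] at hnd ⊢
      grind
    have := List.nodup_iff_injective_get.1 this
    intro i j hij
    apply this
    fin_cases i <;> fin_cases j <;> exact hij
  have him : univ.image ![p, a, b, e, c, d, f] = W := by
    apply eq_of_subset_of_card_le
    · intro x hx
      simp only [mem_image, mem_univ, true_and] at hx
      obtain ⟨i, rfl⟩ := hx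
      fin_cases i <;> simp <;> first | assumption | exact he.1 | exact hf.1
    · rw [card_image_of_injective _ hv, hc]; simp
  have := (seven_v H hF _ hv).2 (by rw [him, hT])
  unfold Lines at this
  simp at this
  rw [h1, h2] at this
  have := H.le1 b e c; have := H.le1 p e f; have := H.le1 b d f
  have := H.le1 a c f; have := H.le1 a e d
  omega

/-- matching condition for cliques -/
lemma nc_clique {S : Finset V} (hS : Clique h S) (x y z u : V)
    (hx : x ∉ S) (hy : y ∉ S) (hz : z ∉ S) (hu : u ∉ S)
    (hxy : x ≠ y) (hxz : x ≠ z) (hxu : x ≠ u) (hyz : y ≠ z) (hyu : y ≠ u) (hzu : z ≠ u) :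
    let w := wt h S
    let k : ℤ := S.card
  (w x y + w z u ≤ k ∨ w x z + w y u ≤ k ∨ w x u + w y z ≤ k) ∨
  (w x y + w z u ≤ k + 1 ∧ w x z + w y u ≤ k + 1) ∨
  (w x y + w z u ≤ k + 1 ∧ w x u + w y z ≤ k + 1) ∨
  (w x z + w y u ≤ k + 1 ∧ w x u + w y z ≤ k + 1) ∨
  (w x y + w z u ≤ k + 2 ∧ w x z + w y u ≤ k + 2 ∧ w x u + w y z ≤ k + 2) := by
  intro w k
  let A : V → V → V → V → Finset V := fun x y z u => S.filter fun s => h s x y = 1 ∧ h s z u = 1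
  have hA : ∀ x y z u, w x y + w z u ≤ k + (A x y z u).card := by
    intro x y z u
    simp only [w, wt, k, A]
    rw [← sum_add_distrib, card_filter, card_eq_sum_ones]
    push_cast
    rw [← sum_add_distrib]
    refine sum_le_sum fun s _ => ?_
    split_ifs with hh
    · rw [hh.1, hh.2]
    · rcases H.v s x y with h1 | h1 <;> rcases H.v s z u with h2 | h2 <;> simp_all
  -- no SDR
  have hSDR : ∀ a ∈ A x y z u, ∀ b ∈ A x z y u, ∀ c ∈ A x u y z, a ≠ b → a ≠ c → b ≠ c → False := by
    intro a ha b hb c hc hab hac hbc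
    simp only [A, mem_filter] at ha hb hc
    have ne : ∀ s ∈ S, ∀ t, t ∉ S → s ≠ t := fun s hs t ht e => ht (e ▸ hs)
    have hnd : [a, b, c, x, y, z, u].Nodup := by
      simp only [List.nodup_cons, List.mem_cons, List.not_mem_nil, not_or, or_false,
        not_false_eq_true, List.nodup_nil, and_true]
      exact ⟨⟨hab, hac, ne a ha.1 x hx, ne a ha.1 y hy, ne a ha.1 z hz, ne a ha.1 u hu⟩,
        ⟨hbc, ne b hb.1 x hx, ne b hb.1 y hy, ne b hb.1 z hz, ne b hb.1 u hu⟩,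
        ⟨ne c hc.1 x hx, ne c hc.1 y hy, ne c hc.1 z hz, ne c hc.1 u hu⟩,
        ⟨hxy, hxz, hxu⟩, ⟨hyz, hyu⟩, hzu⟩
    -- lines: a: xy zu ; b : xz yu ; c : xu yz
    -- 012=a b c; 2 3 4; 0 4 5; 0 3 6; 2 5 6; 1 4 6; 1 3 5
    -- 3 = x; a: 36 45 ; c: 34, 56 ; b : 46, 35;  6 = y, 4 = u, 5 = z
    have hv : Function.Injective ![a, b, c, x, u, z, y] := by
      have : [a, b, c, x, u, z, y].Nodup := by
        simp only [List.nodup_cons, List.mem_cons, List.not_mem_nil, not_or, or_false] at hnd ⊢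
        grind
      have := List.nodup_iff_injective_get.1 this
      intro i j hij
      apply this
      fin_cases i <;> fin_cases j <;> exact hij
    have := hF _ hv
    simp at this
    rw [hS a ha.1 b hb.1 c hc.1 hab hac hbc, hc.2.1, H.s2 a u z, ha.2.2, ha.2.1, H.s2 c z y,
      hc.2.2, H.s2 b u y, hb.2.2, hb.2.1] at this
    omega
  have h1 := hA x y z u
  have h2 := hA x z y u
  have h3 := hA x u y z
  generalize A x y z u = A1 at *
  generalize A x z y u = A2 at *
  generalize A x u y z = A3 at *
  have hall : A1 = ∅ ∨ A2 = ∅ ∨ A3 = ∅ ∨ (A1 ∪ A2).card ≤ 1 ∨ (A1 ∪ A3).card ≤ 1 ∨ 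
      (A2 ∪ A3).card ≤ 1 ∨ (A1 ∪ A2 ∪ A3).card ≤ 2 := by
    by_contra hcon
    push Not at hcon
    obtain ⟨n1, n2, n3, c12, c13, c23, c123⟩ := hcon
    have := (Finset.all_card_le_biUnion_card_iff_exists_injective ![A1, A2, A3]).1 (by
      intro s
      have hs : s ∈ (univ : Finset (Finset (Fin 3))) := mem_univ _
      have n1' : 0 < A1.card := card_pos.2 n1
      have n2' : 0 < A2.card := card_pos.2 n2
      have n3' : 0 < A3.card := card_pos.2 n3
      have : s = ∅ ∨ s = {0} ∨ s = {1} ∨ s = {2} ∨ s = {0, 1} ∨ s = {0, 2} ∨ s = {1, 2} ∨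
        s = {0, 1, 2} := by revert s; decide
      rcases this with rfl | rfl | rfl | rfl | rfl | rfl | rfl | rfl <;>
        simp [-card_pos] <;> first | omega | (have := c123; rw [union_assoc] at this; omega))
    obtain ⟨f, hf, hfm⟩ := this
    exact hSDR (f 0) (by simpa using hfm 0) (f 1) (by simpa using hfm 1) (f 2)
      (by simpa using hfm 2) (fun e => by simpa using hf e)  (fun e => by simpa using hf e)
       (fun e => by simpa using hf e)
  have l1 : A1.card ≤ (A1 ∪ A2).card := card_le_card subset_union_left
  have l2 : A2.card ≤ (A1 ∪ A2).card := card_le_card subset_union_right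
  have l3 : A1.card ≤ (A1 ∪ A3).card := card_le_card subset_union_left
  have l4 : A3.card ≤ (A1 ∪ A3).card := card_le_card subset_union_right
  have l5 : A2.card ≤ (A2 ∪ A3).card := card_le_card subset_union_left
  have l6 : A3.card ≤ (A2 ∪ A3).card := card_le_card subset_union_right
  have l7 : A3.card ≤ (A1 ∪ A2 ∪ A3).card := card_le_card subset_union_right
  have l8 : (A1 ∪ A2).card ≤ (A1 ∪ A2 ∪ A3).card := card_le_card subset_union_left
  rcases hall with e | e | e | e | e | e | e
  · rw [e] at h1; simp at h1; omega
  · rw [e] at h2; simp at h2; omega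
  · rw [e] at h3; simp at h3; omega
  all_goals omega
end
end FanoX


set_option linter.all false
set_option linter.unusedSectionVars false
set_option linter.unusedVariables false
namespace FanoX
open Finset
variable {V : Type*} [DecidableEq V]

lemma num5 (m1 m2 m3 α : ℤ) (a1 : m1 ≤ α) (a2 : m2 ≤ α) (a3 : m3 ≤ α) (b1 : m1 ≤ 10)
    (b2 : m2 ≤ 10) (b3 : m3 ≤ 10)
    (c : (m1 ≤ 5 ∨ m2 ≤ 5 ∨ m3 ≤ 5) ∨ (m1 ≤ 6 ∧ m2 ≤ 6) ∨ (m1 ≤ 6 ∧ m3 ≤ 6) ∨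
      (m2 ≤ 6 ∧ m3 ≤ 6) ∨ (m1 ≤ 7 ∧ m2 ≤ 7 ∧ m3 ≤ 7)) :
    3 * (m1 + m2 + m3) ≤ 4 * α + 35 ∧ (8 ≤ α → m1 + m2 + m3 ≤ 2 * α + 5) := by
  rcases c with (c|c|c)|⟨c,c'⟩|⟨c,c'⟩|⟨c,c'⟩|⟨c,c',c''⟩ <;> constructor <;> omega


def Bn (n : ℕ) : ℤ := 3 * ((n / 2 : ℕ) : ℤ) * (((n + 1) / 2 : ℕ) : ℤ) * (n - 2)

lemma Bn_even (k : ℕ) : Bn (2 * k) = 6 * (k:ℤ) ^ 2 * (k - 1) := by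
  unfold Bn
  have : 2 * k / 2 = k := by omega
  have : (2 * k + 1) / 2 = k := by omega
  simp only [*]; push_cast; ring
lemma Bn_odd (k : ℕ) : Bn (2 * k + 1) = 3 * (k:ℤ) * (k + 1) * (2 * k - 1) := by
  unfold Bn
  have : (2 * k + 1) / 2 = k := by omega
  have : (2 * k + 1 + 1) / 2 = k + 1 := by omega
  simp only [*]; push_cast; ring

lemma Bn_4 (m : ℕ) : Bn (m + 4) = Bn m + 24 + 30 * m + 3 * F m := by
  rcases Nat.even_or_odd' m with ⟨k, rfl | rfl⟩
  · rw [show 2 * k + 4 = 2 * (k + 2) by ring, Bn_even, Bn_even, F_even]; push_cast; ring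
  · rw [show 2 * k + 1 + 4 = 2 * (k + 2) + 1 by ring, Bn_odd, Bn_odd, F_odd]; push_cast; ring

def NoK (h : V → V → V → ℤ) (k : ℕ) (W : Finset V) : Prop :=
  ∀ S ⊆ W, S.card = k → ¬ Clique h S

lemma U_congr {w w' : V → V → ℤ} {B : Finset V} (e : ∀ x ∈ B, ∀ y ∈ B, w x y = w' x y) :
    U w B = U w' B := sum_congr rfl fun x hx => sum_congr rfl fun y hy => e x hx y hy

section
variable {h : V → V → V → ℤ} (H : Hyp h) (hF : FanoFree h)
include H

lemma wt_erase_sum (S : Finset V) (x y : V) :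
    ∑ t ∈ S, wt h (S.erase t) x y = ((S.card : ℤ) - 1) * wt h S x y := by
  have : ∀ t ∈ S, wt h (S.erase t) x y = wt h S x y - h t x y := fun t ht => by
    unfold wt; rw [sum_erase_eq_sub ht]
  rw [sum_congr rfl this, sum_sub_distrib]
  simp only [sum_const, nsmul_eq_mul]
  unfold wt; ring

lemma U_wt_erase (S B : Finset V) :
    ∑ t ∈ S, U (wt h (S.erase t)) B = ((S.card : ℤ) - 1) * U (wt h S) B := by
  unfold U
  rw [sum_comm, mul_sum]
  refine sum_congr rfl fun x _ => ?_
  rw [sum_comm, mul_sum]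
  exact sum_congr rfl fun y _ => wt_erase_sum H S x y

omit H in
lemma Clique.sub {S R : Finset V} (hS : Clique h S) (hR : R ⊆ S) : Clique h R :=
  fun x hx y hy z hz => hS x (hR hx) y (hR hy) z (hR hz)

include hF

lemma linkc4 {S B : Finset V} (hS : Clique h S) (hc : S.card = 4) (hd : Disjoint S B)
    (hB : B.card ≠ 3) : U (wt h S) B ≤ F B.card := by
  let w : V → V → ℤ := fun x y => if x ∈ S ∨ y ∈ S then 0 else wt h S x y
  have e : U (wt h S) B = U w B := U_congr fun x hx y hy => by
    have h1 := disjoint_right.1 hd hx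
    have h2 := disjoint_right.1 hd hy
    simp [w, h1, h2]
  have hw : Wt w := ⟨fun x y => by simp only [w, or_comm]; rw [(H.wtA S).s], fun x => by
    simp only [w]; rw [(H.wtA S).d]; simp⟩
  have h4 : ∀ x y, w x y ≤ 4 := fun x y => by
    simp only [w]; split_ifs
    · norm_num
    · have := wt_le H S x y; rw [hc] at this; exact_mod_cast this
  have h0 : ∀ x y, x ∈ S → w x y = 0 := fun x y hx => by simp [w, hx]
  have h0' : ∀ x y, y ∈ S → w x y = 0 := fun x y hx => by simp [w, hx]
  rw [e]
  refine link4 hw h4 ?_ _ hB B rfl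
  intro x y z u hxy hxz hxu hyz hyu hzu
  by_cases hx : x ∈ S
  · left; left; rw [h0 x y hx]; have := h4 z u; omega
  by_cases hy : y ∈ S
  · left; left; rw [h0' x y hy]; have := h4 z u; omega
  by_cases hz : z ∈ S
  · left; left; rw [h0 z u hz]; have := h4 x y; omega
  by_cases hu : u ∈ S
  · left; left; rw [h0' z u hu]; have := h4 x y; omega
  have := nc_clique H hF hS x y z u hx hy hz hu hxy hxz hxu hyz hyu hzu
  simp only [hc] at this
  simp only [w, hx, hy, hz, hu, or_self, if_false]
  exact_mod_cast this

lemma linkc5 {S B : Finset V} (hS : Clique h S) (hc : S.card = 5) (hd : Disjoint S B)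
    (hB : B.card ≠ 3) : 4 * U (wt h S) B ≤ 5 * F B.card := by
  have e := U_wt_erase H S B
  have l : ∑ t ∈ S, U (wt h (S.erase t)) B ≤ ∑ t ∈ S, F B.card := sum_le_sum fun t ht =>
    linkc4 H hF (hS.sub (erase_subset _ _)) (by rw [card_erase_of_mem ht, hc])
      (hd.mono_left (erase_subset _ _)) hB
  rw [e, hc] at l; simp [hc] at l; linarith

lemma linkc6 {S B : Finset V} (hS : Clique h S) (hc : S.card = 6) (hd : Disjoint S B)
    (hB : B.card ≠ 3) : 2 * U (wt h S) B ≤ 3 * F B.card := by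
  have e := U_wt_erase H S B
  have l : ∑ t ∈ S, 4 * U (wt h (S.erase t)) B ≤ ∑ t ∈ S, 5 * F B.card := sum_le_sum fun t ht =>
    linkc5 H hF (hS.sub (erase_subset _ _)) (by rw [card_erase_of_mem ht, hc])
      (hd.mono_left (erase_subset _ _)) hB
  rw [← mul_sum, e, hc] at l; simp [hc] at l; linarith

omit hF in
lemma split_T {S W : Finset V} (hSW : S ⊆ W) :
    T h W = T h S + 3 * ∑ z ∈ W \ S, D h S z + 3 * U (wt h S) (W \ S) + T h (W \ S) := by
  conv_lhs => rw [← union_sdiff_of_subset hSW]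
  exact T_union H disjoint_sdiff

omit hF in
lemma D_noK {S W : Finset V} {k : ℕ} (hS : Clique h S) (hSW : S ⊆ W) (hc : S.card = k)
    (hno : NoK h (k + 1) W) {z : V} (hz : z ∈ W \ S) : D h S z ≤ k * (k - 1) - 2 := by
  rw [mem_sdiff] at hz
  have h1 := T_not_clique H (hno (insert z S) (insert_subset hz.1 hSW)
    (by rw [card_insert_of_notMem hz.2, hc]))
  rw [T_insert H hz.2, T_clique H hS, card_insert_of_notMem hz.2, hc] at h1
  push_cast at h1
  nlinarith

omit hF in
lemma five_T {W : Finset V} (hc : W.card = 5) (hno : NoK h 5 W) : T h W ≤ 54 := by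
  have := T_not_clique H (hno W (subset_refl _) hc)
  rw [hc] at this; norm_num at this; exact this

omit hF in
lemma six_T {W : Finset V} (hc : W.card = 6) (hno : NoK h 5 W) : T h W ≤ 108 := by
  have e := T_avg H W
  have l : ∑ v ∈ W, T h (W.erase v) ≤ ∑ v ∈ W, 54 := sum_le_sum fun v hv =>
    five_T H (by rw [card_erase_of_mem hv, hc]) (fun S hS => hno S (hS.trans (erase_subset _ _)))
  rw [e] at l; simp [hc] at l; linarith

omit hF in
lemma noK4 (n : ℕ) (hn : 4 ≤ n) : ∀ W : Finset V, W.card = n → NoK h 4 W →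
    4 * T h W ≤ 3 * (n * (n - 1) * (n - 2)) := by
  induction n, hn using Nat.le_induction with
  | base =>
    intro W hc hno
    have := T_not_clique H (hno W (subset_refl _) hc)
    rw [hc] at this; norm_num at *; linarith
  | succ n hn ih =>
    intro W hc hno
    have e := T_avg H W
    have l := sum_le_sum (s := W) fun v hv => ih (W.erase v) (by rw [card_erase_of_mem hv, hc]; rfl)
      (fun S hS => hno S (hS.trans (erase_subset _ _)))
    rw [← mul_sum, e] at l
    simp only [sum_const, nsmul_eq_mul, hc] at l
    push_cast at *
    have hp : (0:ℤ) < n - 2 := by have : (4:ℤ) ≤ n := by exact_mod_cast hn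
                                  linarith
    refine le_of_mul_le_mul_left ?_ hp
    linarith

omit hF in
lemma exists_K4 {W : Finset V} (hn : 8 ≤ W.card) (hT : Bn W.card ≤ T h W) :
    ∃ S ⊆ W, S.card = 4 ∧ Clique h S := by
  by_contra hcon
  push Not at hcon
  have h1 := noK4 H W.card (by omega) W rfl hcon
  have h2 : 3 * ((W.card:ℤ) * (W.card - 1) * (W.card - 2)) < 4 * Bn W.card := by
    generalize W.card = n at *
    rcases Nat.even_or_odd' n with ⟨k, rfl | rfl⟩
    · have : (4:ℤ) ≤ k := by exact_mod_cast (by omega : 4 ≤ k)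
      rw [Bn_even]; push_cast; nlinarith
    · have : (3:ℤ) ≤ k := by exact_mod_cast (by omega : 3 ≤ k)
      rw [Bn_odd]; push_cast; nlinarith
  linarith

lemma caseA {S W : Finset V} (hn : 8 ≤ W.card) (hno : NoK h 5 W) (hSW : S ⊆ W) (hS : Clique h S)
    (hc : S.card = 4) (hT : T h (W \ S) ≤ Bn (W \ S).card) :
    T h W ≤ Bn W.card ∧ (Bn W.card ≤ T h W → ∀ z ∈ W \ S, D h S z = 10) := by
  have e := split_T H hSW
  have hm : (W \ S).card + 4 = W.card := by rw [card_sdiff_of_subset hSW, hc]; omega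
  have hD : ∀ z ∈ W \ S, D h S z ≤ 10 := fun z hz => by
    have := D_noK H hS hSW hc hno hz; norm_num at this; exact this
  have hU := linkc4 H hF hS hc (disjoint_sdiff (s := S) (t := W)) (by omega)
  have hB := Bn_4 (W \ S).card
  rw [hm] at hB
  have hs := sum_le_sum hD
  have h0 := T_clique H hS
  rw [hc] at h0; norm_num at h0
  have hs' : ∑ z ∈ W \ S, (10:ℤ) = 10 * (W \ S).card := by simp [mul_comm]
  refine ⟨by linarith, fun hge => ?_⟩
  have : ∑ z ∈ W \ S, D h S z = ∑ z ∈ W \ S, 10 := by linarith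
  exact (sum_eq_sum_iff_of_le hD).1 this

lemma caseK6 {S W : Finset V} {k : ℕ} (hk : 1 ≤ k) (hn : W.card = 2 * k + 7) (hSW : S ⊆ W)
    (hS : Clique h S) (hc : S.card = 6) (hT : 3 ≤ k → T h (W \ S) ≤ Bn (2 * k + 1)) :
    T h W < Bn W.card := by
  have e := split_T H hSW
  have hm : (W \ S).card = 2 * k + 1 := by rw [card_sdiff_of_subset hSW, hc]; omega
  have h0 := T_clique H hS
  rw [hc] at h0; norm_num at h0
  have hD : ∀ z ∈ W \ S, D h S z ≤ 20 := fun z hz => by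
    rw [mem_sdiff] at hz
    have := seven H hF (W := insert z S) (by rw [card_insert_of_notMem hz.2, hc])
    rw [T_insert H hz.2, h0] at this; linarith
  have hs := sum_le_sum hD
  have hs' : ∑ z ∈ W \ S, (20:ℤ) = 20 * (2 * k + 1) := by simp [hm, mul_comm]
  rw [hs'] at hs
  have hB : Bn W.card = 3 * ((k:ℤ)+3) * (k + 4) * (2 * k + 5) := by
    rw [hn, show 2 * k + 7 = 2 * (k + 3) + 1 by ring, Bn_odd]; push_cast; ring
  rw [hB]
  have hT' := T_le H (W \ S)
  rw [hm] at hT'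
  rcases Nat.lt_or_ge k 2 with h2 | h2
  · obtain rfl : k = 1 := by omega
    have hU := U_le (H.wtA S) (W := W \ S) (c := 6) (fun x _ y _ _ => by
      have := wt_le H S x y; rw [hc] at this; exact_mod_cast this)
    rw [hm] at hU
    norm_num at *
    linarith
  have hU := linkc6 H hF hS hc (disjoint_sdiff (s := S) (t := W)) (by omega)
  rw [hm, F_odd] at hU
  rcases Nat.lt_or_ge k 3 with h3 | h3
  · obtain rfl : k = 2 := by omega
    norm_num at *
    linarith
  have := hT h3
  rw [Bn_odd] at this
  have : (3:ℤ) ≤ k := by exact_mod_cast h3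
  nlinarith

lemma caseK5 {S W : Finset V} {k : ℕ} (hk : 2 ≤ k) (hn : W.card = 2 * k + 5) (hSW : S ⊆ W)
    (hS : Clique h S) (hc : S.card = 5) (hno : NoK h 6 W)
    (hT : 4 ≤ k → T h (W \ S) ≤ Bn (2 * k)) :
    T h W < Bn W.card := by
  have e := split_T H hSW
  have hd := disjoint_sdiff (s := S) (t := W)
  have hnS : ∀ z ∈ W \ S, z ∉ S := fun z hz => (mem_sdiff.1 hz).2
  have hm : (W \ S).card = 2 * k := by rw [card_sdiff_of_subset hSW, hc]; omega
  have h0 := T_clique H hS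
  rw [hc] at h0; norm_num at h0
  have hD : ∀ z ∈ W \ S, D h S z ≤ 18 := fun z hz => by
    have := D_noK H hS hSW hc hno hz; norm_num at this; exact this
  have hT' := T_le H (W \ S)
  rw [hm] at hT'
  let a : V → ℤ := fun z => (20 - D h S z) / 2
  have ha : ∀ z, D h S z = 20 - 2 * a z := fun z => by
    have := D_even H S z; simp only [a]; omega
  have ha1 : ∀ z ∈ W \ S, 1 ≤ a z := fun z hz => by have := hD z hz; rw [ha] at this; omega
  have hw5 : ∀ x y, wt h S x y ≤ 5 := fun x y => by
    have := wt_le H S x y; rw [hc] at this; exact_mod_cast this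
  have hwa : ∀ x ∈ W \ S, ∀ y ∈ W \ S, x ≠ y → wt h S x y ≤ a x + a y := by
    intro x hx y hy hxy
    have hx' := hnS x hx
    have hy' := hnS y hy
    have hy'' : y ∉ insert x S := by simp [hy', hxy.symm]
    have := seven H hF (W := insert y (insert x S))
      (by rw [card_insert_of_notMem hy'', card_insert_of_notMem hx', hc])
    rw [T_insert H hy'', D_insert H hx', T_insert H hx', h0, ha, ha] at this
    linarith
  have hQ : ∀ x ∈ W \ S, ∀ y ∈ W \ S, ∀ z ∈ W \ S, ∀ u ∈ W \ S,
      x ≠ y → x ≠ z → x ≠ u → y ≠ z → y ≠ u → z ≠ u →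
      3 * (wt h S x y + wt h S x z + wt h S y z + (wt h S x u + wt h S y u + wt h S z u)) ≤
      4 * (a x + a y + a z + a u) + 35 ∧ (8 ≤ a x + a y + a z + a u → 
      1 * (wt h S x y + wt h S x z + wt h S y z + (wt h S x u + wt h S y u + wt h S z u)) ≤
      2 * (a x + a y + a z + a u) + 5) := by
    intro x hx y hy z hz u hu hxy hxz hxu hyz hyu hzu
    have c := nc_clique H hF hS x y z u (hnS x hx) (hnS y hy) (hnS z hz) (hnS u hu)
      hxy hxz hxu hyz hyu hzu
    simp only [hc] at c
    have := hwa x hx y hy hxy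
    have := hwa x hx z hz hxz
    have := hwa x hx u hu hxu
    have := hwa y hy z hz hyz
    have := hwa y hy u hu hyu
    have := hwa z hz u hu hzu
    have := hw5 x y; have := hw5 x z; have := hw5 x u
    have := hw5 y z; have := hw5 y u; have := hw5 z u
    generalize wt h S x y = w1 at *
    generalize wt h S x z = w2 at *
    generalize wt h S x u = w3 at *
    generalize wt h S y z = w4 at *
    generalize wt h S y u = w5 at *
    generalize wt h S z u = w6 at *
    generalize a x = a1 at *
    generalize a y = a2 at *
    generalize a z = a3 at *
    generalize a u = a4 at *
    norm_num at c
    have := num5 (w1 + w6) (w2 + w5) (w3 + w4) (a1 + a2 + a3 + a4) (by linarith) (by linarith)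
      (by linarith) (by linarith) (by linarith) (by linarith) c
    exact ⟨by linarith [this.1], fun h8 => by linarith [this.2 h8]⟩
  have q1 := quad_avg (H.wtA S) a 3 4 35 (W \ S) (fun x hx y hy z hz u hu h1 h2 h3 h4 h5 h6 =>
    (hQ x hx y hy z hz u hu h1 h2 h3 h4 h5 h6).1) (2 * k) (by omega) (W \ S) (subset_refl _) hm
  have hU := linkc5 H hF hS hc hd (by omega)
  rw [hm, F_even] at hU
  have hsD : ∑ z ∈ W \ S, D h S z = 40 * k - 2 * ∑ z ∈ W \ S, a z := by
    rw [sum_congr rfl fun z _ => ha z, sum_sub_distrib, ← mul_sum]; simp [hm]; ring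
  rw [hsD, h0] at e
  have hB : Bn W.card = 3 * ((k:ℤ)+2) * (k + 3) * (2 * k + 3) := by
    rw [hn, show 2 * k + 5 = 2 * (k + 2) + 1 by ring, Bn_odd]; push_cast; ring
  rw [hB]
  have hk' : (2:ℤ) ≤ k := by exact_mod_cast hk
  by_cases hk3 : k = 3
  · subst hk3
    have hT6 : T h (W \ S) ≤ 114 := by
      have := T_not_clique H (hno (W \ S) sdiff_subset hm)
      rw [hm] at this; norm_num at this; exact this
    norm_num at *
    by_cases h14 : ∑ z ∈ W \ S, a z = 14
    · by_cases h2 : ∀ z ∈ W \ S, 2 ≤ a z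
      · have q2 := quad_avg (H.wtA S) a 1 2 5 (W \ S) (fun x hx y hy z hz u hu h1 h2' h3 h4 h5 h6 =>
          (by
            have hh := (hQ x (mem_sdiff.1 hx).1 (mem_sdiff.1 hx).2 y (mem_sdiff.1 hy).1
              (mem_sdiff.1 hy).2 z (mem_sdiff.1 hz).1 (mem_sdiff.1 hz).2 u (mem_sdiff.1 hu).1
              (mem_sdiff.1 hu).2 h1 h2' h3 h4 h5 h6).2
            have := h2 x hx
            have := h2 y hy
            have := h2 z hz
            have := h2 u hu
            have := hh (by linarith)
            linarith))
          6 (by omega) (W \ S) (subset_refl _) hm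
        norm_num [h14] at q2
        rw [h14] at *
        omega
      · push Not at h2
        obtain ⟨v, hv, hv2⟩ := h2
        obtain ⟨hvW, hvS⟩ := mem_sdiff.1 hv
        have hE := U_erase (H.wtA S) hv
        have hU5 := linkc5 H hF hS hc (B := (W \ S).erase v) (hd.mono_right (erase_subset _ _))
          (by rw [card_erase_of_mem hv, hm]; norm_num)
        rw [card_erase_of_mem hv, hm] at hU5
        have e5 : F (6 - 1) = 64 := by norm_num [F]
        rw [e5] at hU5
        have hsum : ∑ y ∈ W \ S, wt h S v y ≤ 18 := by
          rw [← add_sum_erase _ _ hv, (H.wtA S).d]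
          have : ∑ y ∈ (W \ S).erase v, wt h S v y ≤ ∑ y ∈ (W \ S).erase v, (a v + a y) :=
            sum_le_sum fun y hy => by
              have hy' := mem_sdiff.1 (mem_of_mem_erase hy)
              exact hwa v hvW hvS y hy'.1 hy'.2 (ne_of_mem_erase hy).symm
          rw [sum_add_distrib, sum_erase_eq_sub (f := a) hv, h14] at this
          simp [card_erase_of_mem hv, hm] at this
          omega
        rw [h14] at *
        omega
    · have : ∑ z ∈ W \ S, a z ≤ 13 ∨ 15 ≤ ∑ z ∈ W \ S, a z := by omega
      rcases this with h | h <;> omega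
  · have hTB : T h (W \ S) ≤ 6 * (k:ℤ) ^ 2 * (k - 1) := by
      rcases Nat.lt_or_ge k 4 with h4 | h4
      · obtain rfl : k = 2 := by omega
        norm_num at *; exact hT'
      · have := hT h4; rwa [Bn_even] at this
    generalize ∑ z ∈ W \ S, a z = A at *
    by_cases hA : 4 * (k:ℤ) + 2 ≤ A
    · nlinarith
    · have hA' : A ≤ 4 * k + 1 := by omega
      push_cast at q1
      have : 0 ≤ (4 * k + 1 - A) * (32 * (k:ℤ) - 52) := mul_nonneg (by linarith) (by linarith)
      nlinarith
end
end FanoX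


set_option linter.all false
set_option linter.unusedSectionVars false
set_option linter.unusedVariables false
namespace FanoX
open Finset
variable {V : Type*} [DecidableEq V]
section
variable {h : V → V → V → ℤ} (H : Hyp h) (hF : FanoFree h)
include H hF

lemma small_T {m : ℕ} {W : Finset V} (hno : NoK h 5 W) (hm : 4 ≤ m) (hc : W.card = m)
    (IH : 7 ≤ m → T h W ≤ Bn m) : T h W ≤ Bn m := by
  rcases Nat.lt_or_ge m 7 with h7 | h7
  · obtain rfl | rfl | rfl : m = 4 ∨ m = 5 ∨ m = 6 := by omega
    · have := T_le H W
      rw [hc] at this; norm_num at this; norm_num [Bn]; exact this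
    · have := five_T H hc hno; norm_num [Bn]; exact this
    · have := six_T H hc hno; norm_num [Bn]; exact this
  · exact IH h7

lemma odd_step {W : Finset V} {k : ℕ} (hk : 4 ≤ k) (hn : W.card = 2 * k + 1)
    (IH : ∀ W' : Finset V, 7 ≤ W'.card → W'.card < W.card → T h W' ≤ Bn W'.card) :
    T h W ≤ Bn W.card ∧ (Bn W.card ≤ T h W → NoK h 5 W) := by
  by_cases h5 : NoK h 5 W
  · refine ⟨?_, fun _ => h5⟩
    by_contra hlt
    push Not at hlt
    obtain ⟨S, hSW, hS4, hS⟩ := exists_K4 H (by omega) hlt.le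
    have hm : (W \ S).card + 4 = W.card := by
      have := card_le_card hSW
      rw [card_sdiff_of_subset hSW, hS4]; omega
    have := (caseA H hF (by omega) h5 hSW hS hS4 (small_T H hF
      (fun S' hS' => h5 S' (hS'.trans sdiff_subset)) (by omega) rfl
      (fun h7 => IH _ h7 (by omega)))).1
    linarith
  · suffices T h W < Bn W.card from ⟨this.le, fun h' => absurd this (not_lt.2 h')⟩
    by_cases h6 : NoK h 6 W
    · unfold NoK at h5
      push Not at h5
      obtain ⟨S, hSW, hc, hS⟩ := h5
      obtain ⟨j, rfl⟩ : ∃ j, k = j + 2 := ⟨k - 2, by omega⟩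
      have hm : (W \ S).card = 2 * j := by rw [card_sdiff_of_subset hSW, hc]; omega
      exact caseK5 H hF (k := j) (by omega) (by omega) hSW hS hc h6 (fun h4 => by
        rw [← hm]; exact IH _ (by omega) (by omega))
    · unfold NoK at h6
      push Not at h6
      obtain ⟨S, hSW, hc, hS⟩ := h6
      obtain ⟨j, rfl⟩ : ∃ j, k = j + 3 := ⟨k - 3, by omega⟩
      have hm : (W \ S).card = 2 * j + 1 := by rw [card_sdiff_of_subset hSW, hc]; omega
      exact caseK6 H hF (k := j) (by omega) (by omega) hSW hS hc (fun h4 => by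
        rw [← hm]; exact IH _ (by omega) (by omega))

lemma even_step {W : Finset V} {k : ℕ} (hk : 4 ≤ k) (hn : W.card = 2 * k)
    (IH : ∀ W' : Finset V, 7 ≤ W'.card → W'.card < W.card → T h W' ≤ Bn W'.card) :
    T h W ≤ Bn W.card ∧
      (Bn W.card ≤ T h W → ∀ v ∈ W, T h (W.erase v) = Bn (W.erase v).card) := by
  obtain ⟨j, rfl⟩ : ∃ j, k = j + 1 := ⟨k - 1, by omega⟩
  have hce : ∀ v ∈ W, (W.erase v).card = 2 * j + 1 := fun v hv => by
    rw [card_erase_of_mem hv]; omega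
  have hle : ∀ v ∈ W, T h (W.erase v) ≤ Bn (2 * j + 1) := fun v hv => by
    rw [← hce v hv]; exact IH _ (by rw [hce v hv]; omega) (by rw [hce v hv]; omega)
  have hs := sum_le_sum hle
  have e := T_avg H W
  have e2 : ∑ v ∈ W, Bn (2 * j + 1) = (2 * (j:ℤ) - 1) * Bn W.card := by
    rw [sum_const, hn, Bn_even, Bn_odd]; simp; ring
  rw [e, e2, hn] at hs
  have hj : (3:ℤ) ≤ j := by exact_mod_cast (by omega : 3 ≤ j)
  push_cast at hs e hn
  rw [hn] at e
  refine ⟨?_, fun hge v hv => ?_⟩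
  · rw [hn]
    exact le_of_mul_le_mul_left (a := 2 * (j:ℤ) - 1) (by linarith) (by linarith)
  · have heq : ∑ v ∈ W, T h (W.erase v) = ∑ v ∈ W, Bn (2 * j + 1) := by
      apply le_antisymm (sum_le_sum hle)
      rw [e, e2]; push_cast
      nlinarith
    rw [hce v hv]
    exact (sum_eq_sum_iff_of_le hle).1 heq v hv

lemma ex_all (n : ℕ) : ∀ W : Finset V, 7 ≤ W.card → W.card = n → T h W ≤ Bn W.card := by
  induction n using Nat.strong_induction_on with
  | _ n ih =>
    intro W h7 hc
    have IH : ∀ W' : Finset V, 7 ≤ W'.card → W'.card < W.card → T h W' ≤ Bn W'.card :=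
      fun W' h1 h2 => ih _ (by omega) W' h1 rfl
    rcases Nat.eq_or_lt_of_le h7 with h8 | h8
    · have := seven H hF h8.symm
      rw [← h8]; norm_num [Bn]; exact this
    · rcases Nat.even_or_odd' W.card with ⟨k, hk | hk⟩
      · exact (even_step H hF (by omega) hk IH).1
      · exact (odd_step H hF (by omega) hk IH).1

lemma ex {W : Finset V} (h7 : 7 ≤ W.card) : T h W ≤ Bn W.card := ex_all H hF _ W h7 rfl

omit hF in
lemma two_pairs {S : Finset V} {z : V} (hc : S.card = 5) (hD : D h S z ≤ 16) :
    ∃ p ∈ S, ∃ q ∈ S, ∃ x ∈ S, ∃ y ∈ S, p ≠ q ∧ x ≠ y ∧ ¬ (x = p ∧ y = q) ∧ ¬ (x = q ∧ y = p) ∧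
      h z p q = 0 ∧ h z x y = 0 := by
  have key : ∀ p ∈ S, ∀ q ∈ S, ∃ x ∈ S, ∃ y ∈ S, x ≠ y ∧ ¬ (x = p ∧ y = q) ∧
      ¬ (x = q ∧ y = p) ∧ h z x y = 0 := by
    intro p hp q hq
    by_contra hcon
    push Not at hcon
    have : ∀ x ∈ S, ∀ y ∈ S, 1 - (if x = y then 1 else 0) - (if x = p ∧ y = q then 1 else 0)
        - (if x = q ∧ y = p then 1 else 0) ≤ h z x y := by
      intro x hx y hy
      have h1 := hcon x hx y hy
      have h2 := H.v z x y
      split_ifs <;> grind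
    have := sum_le_sum fun x hx => sum_le_sum (this x hx)
    simp [sum_sub_distrib, ite_and, hp, hq, hc] at this
    unfold D at hD
    linarith
  have hne : S.Nonempty := card_pos.1 (by omega)
  obtain ⟨s, hs⟩ := hne
  obtain ⟨p, hp, q, hq, hpq, -, -, h0⟩ := key s hs s hs
  obtain ⟨x, hx, y, hy, hxy, a, b, h1⟩ := key p hp q hq
  exact ⟨p, hp, q, hq, x, hx, y, hy, hpq, hxy, a, b, h0, h1⟩

set_option maxHeartbeats 1000000 in
lemma noK5_8 {W : Finset V} (hc : W.card = 8) (hT : T h W = 288) : NoK h 5 W := by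
  have h7 : ∀ v ∈ W, T h (W.erase v) = 180 := by
    intro v hv
    have := (even_step H hF (k := 4) le_rfl (by omega) (fun W' a _ => ex H hF a)).2
      (by rw [hc, hT]; norm_num [Bn]) v hv
    rw [this, card_erase_of_mem hv, hc]; norm_num [Bn]
  have F8 : ∀ p ∈ W, ∀ a ∈ W, ∀ b ∈ W, ∀ c ∈ W, ∀ d ∈ W, [p, a, b, c, d].Nodup →
      h p a b = 0 → h p c d = 0 → False := by
    intro p hp a ha b hb c hc' d hd hn h1 h2
    have hS : ({p, a, b, c, d} : Finset V).card ≤ 5 := by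
      have := List.toFinset_card_of_nodup hn
      simpa using this.le
    obtain ⟨v, hv, hv'⟩ := exists_mem_notMem_of_card_lt_card (s := ({p, a, b, c, d} : Finset V))
      (t := W) (by omega)
    simp only [mem_insert, mem_singleton, not_or] at hv'
    obtain ⟨v1, v2, v3, v4, v5⟩ := hv'
    exact seven_eq H hF (W := W.erase v) (by rw [card_erase_of_mem hv, hc]) (h7 v hv)
      (mem_erase.2 ⟨Ne.symm v1, hp⟩) (mem_erase.2 ⟨Ne.symm v2, ha⟩) (mem_erase.2 ⟨Ne.symm v3, hb⟩)
      (mem_erase.2 ⟨Ne.symm v4, hc'⟩) (mem_erase.2 ⟨Ne.symm v5, hd⟩) hn h1 h2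
  intro S hSW hS5 hS
  have h3 : (W \ S).card = 3 := by rw [card_sdiff_of_subset hSW, hc, hS5]
  obtain ⟨x, y, z, hxy, hxz, hyz, hW⟩ := card_eq_three.1 h3
  have hx : x ∈ W \ S := by rw [hW]; simp
  have hy : y ∈ W \ S := by rw [hW]; simp
  have hz : z ∈ W \ S := by rw [hW]; simp
  rw [mem_sdiff] at hx hy hz
  obtain ⟨hx, hx'⟩ := hx
  obtain ⟨hy, hy'⟩ := hy
  obtain ⟨hz, hz'⟩ := hz
  have hmem : ∀ w, w ∈ W ↔ w = x ∨ w = y ∨ w = z ∨ w ∈ S := by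
    intro w
    constructor
    · intro hw
      by_cases hwS : w ∈ S
      · tauto
      · have : w ∈ W \ S := mem_sdiff.2 ⟨hw, hwS⟩
        rw [hW] at this; simp at this; tauto
    · rintro (rfl | rfl | rfl | hw)
      · exact hx
      · exact hy
      · exact hz
      · exact hSW hw
  have ex0 : W = insert x (insert y (insert z S)) := by ext w; simp [hmem]
  have e1 : W.erase x = insert y (insert z S) := by ext w; simp [hmem]; grind
  have e2 : W.erase y = insert x (insert z S) := by ext w; simp [hmem]; grind
  have e3 : W.erase z = insert x (insert y S) := by ext w; simp [hmem]; grind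
  have h0 := T_clique H hS
  rw [hS5] at h0; norm_num at h0
  have t1 := h7 x hx
  have t2 := h7 y hy
  have t3 := h7 z hz
  rw [e1, T_insert H (by simp [*]), D_insert H (by simp [*]), T_insert H (by simp [*]), h0] at t1
  rw [e2, T_insert H (by simp [*]), D_insert H (by simp [*]), T_insert H (by simp [*]), h0] at t2
  rw [e3, T_insert H (by simp [*]), D_insert H (by simp [*]), T_insert H (by simp [*]), h0] at t3
  have t0 := T_erase H hx
  rw [h7 x hx, hT] at t0
  have d0 : D h W x = D h S x + 2 * wt h S z x + 2 * (wt h S y x + h z y x) := by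
    rw [ex0, D_insert H (by simp [*]), D_insert H (by simp [*]), D_insert H (by simp [*])]
    have : wt h (insert y (insert z S)) x x = 0 := (H.wtA _).d x
    rw [this]
    have : wt h (insert z S) y x = h z y x + wt h S y x := by
      unfold wt; rw [sum_insert hz']
    rw [this]; ring
  rw [d0] at t0
  have w1 := wt_le H S z x
  have w2 := wt_le H S y x
  have w3 := wt_le H S z y
  rw [hS5] at w1 w2 w3
  push_cast at w1 w2 w3
  have s1 := H.le1 z y x
  have s2 := H.nn z y x
  have v1 := D_even H S x
  have v2 := D_even H S y
  have v3 := D_even H S z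
  have u3 : wt h S y x = wt h S x y := (H.wtA S).s _ _
  have D1 : D h S x ≤ 16 := by omega
  have D2 : D h S y ≤ 16 := by omega
  have star : ∀ x ∈ W, x ∉ S → D h S x ≤ 16 → ∃ p ∈ S, ∃ q ∈ S, ∃ r ∈ S, p ≠ q ∧ p ≠ r ∧ q ≠ r ∧
      h x p q = 0 ∧ h x p r = 0 := by
    intro x hx hx' D1
    obtain ⟨p, hp, q, hq, p', hp', q', hq', n1, n2, n3, n4, z1, z2⟩ := two_pairs H hS5 D1
    have i1 : h x q p = 0 := by rw [H.s2]; exact z1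
    have i2 : h x q' p' = 0 := by rw [H.s2]; exact z2
    have ne : ∀ s ∈ S, x ≠ s := fun s hs e => hx' (e ▸ hs)
    have f1 := ne p hp
    have f2 := ne q hq
    have f3 := ne p' hp'
    have f4 := ne q' hq'
    by_cases c1 : p = p'
    · subst c1
      exact ⟨p, hp, q, hq, q', hq', n1, n2, fun e => n3 ⟨rfl, e.symm⟩, z1, z2⟩
    by_cases c2 : p = q'
    · subst c2
      exact ⟨p, hp, q, hq, p', hp', n1, c1, fun e => n4 ⟨e.symm, rfl⟩, z1, i2⟩
    by_cases c3 : q = p'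
    · subst c3
      exact ⟨q, hq, p, hp, q', hq', n1.symm, n2, fun e => n4 ⟨rfl, e.symm⟩, i1, z2⟩
    by_cases c4 : q = q'
    · subst c4
      exact ⟨q, hq, p, hp, p', hp', n1.symm, c3, fun e => n3 ⟨e.symm, rfl⟩, i1, i2⟩
    exact (F8 x hx p (hSW hp) q (hSW hq) p' (hSW hp') q' (hSW hq') (by simp [f1, f2, f3, f4, n1, n2, c1, c2, c3, c4]) z1 z2).elim
  obtain ⟨p, hp, q, hq, r, hr, n1, n2, n3, z1, z2⟩ := star x hx hx' D1
  obtain ⟨p', hp', q', hq', r', hr', m1, m2, m3, y1, y2⟩ := star y hy hy' D2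
  have X : ∀ s ∈ S, ∀ a ∈ S, ∀ b ∈ S, s ≠ a → s ≠ b → a ≠ b → h x s a = 0 → h y s b = 0 →
      False := by
    intro s hs a ha b hb k1 k2 k3 o1 o2
    have ne : ∀ s ∈ S, x ≠ s := fun s hs e => hx' (e ▸ hs)
    have ne' : ∀ s ∈ S, y ≠ s := fun s hs e => hy' (e ▸ hs)
    have f1 := ne s hs
    have f2 := ne a ha
    have f3 := ne b hb
    have g1 := ne' s hs
    have g2 := ne' a ha
    have g3 := ne' b hb
    refine F8 s (hSW hs) x hx a (hSW ha) y hy b (hSW hb) ?_ (by rw [H.s1]; exact o1)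
      (by rw [H.s1]; exact o2)
    simp [hxy, k1, k2, k3, f2, f3, g1, g3, Ne.symm f1, Ne.symm g1, Ne.symm g2]
  have hcard : ¬ Disjoint ({p, q, r} : Finset V) {p', q', r'} := by
    intro hd
    have a1 : ({p, q, r} : Finset V).card = 3 := card_eq_three.2 ⟨_, _, _, n1, n2, n3, rfl⟩
    have a2 : ({p', q', r'} : Finset V).card = 3 := card_eq_three.2 ⟨_, _, _, m1, m2, m3, rfl⟩
    have := card_union_of_disjoint hd
    have hsub : ({p, q, r} ∪ {p', q', r'} : Finset V) ⊆ S := by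
      intro w hw; simp only [mem_union, mem_insert, mem_singleton] at hw; rcases hw with (rfl|rfl|rfl)|(rfl|rfl|rfl) <;> assumption
    have := card_le_card hsub
    omega
  have z1' : h x q p = 0 := by rw [H.s2]; exact z1
  have z2' : h x r p = 0 := by rw [H.s2]; exact z2
  have y1' : h y q' p' = 0 := by rw [H.s2]; exact y1
  have y2' : h y r' p' = 0 := by rw [H.s2]; exact y2
  rw [disjoint_left] at hcard
  push Not at hcard
  obtain ⟨w, hw1, hw2⟩ := hcard
  simp only [mem_insert, mem_singleton] at hw1 hw2
  clear star F8 h7 hmem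
  have A1 : ∀ b ∈ S, p ≠ b → h y p b = 0 → False := fun b hb k o => by
    by_cases c : q = b
    · exact X p hp r hr b hb n2 k (by rw [← c]; exact n3.symm) z2 o
    · exact X p hp q hq b hb n1 k c z1 o
  have A2 : ∀ b ∈ S, p' ≠ b → h x p' b = 0 → False := fun b hb k o => by
    by_cases c : b = q'
    · exact X p' hp' b hb r' hr' k m2 (by rw [c]; exact m3) o y2
    · exact X p' hp' b hb q' hq' k m1 c o y1
  by_cases hpp : p = p'
  · exact A1 q' hq' (hpp ▸ m1) (hpp ▸ y1)
  rcases hw1 with rfl | rfl | rfl <;> rcases hw2 with rfl | rfl | rfl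
  · exact hpp rfl
  · exact A1 p' hp' hpp y1'
  · exact A1 p' hp' hpp y2'
  · exact A2 p hp (Ne.symm hpp) z1'
  · exact X _ hq p hp p' hp' n1.symm m1.symm hpp z1' y1'
  · exact X _ hq p hp p' hp' n1.symm m2.symm hpp z1' y2'
  · exact A2 p hp (Ne.symm hpp) z2'
  · exact X _ hr p hp p' hp' n2.symm m1.symm hpp z2' y1'
  · exact X _ hr p hp p' hp' n2.symm m2.symm hpp z2' y2'

lemma noK5 {W : Finset V} (hn : 8 ≤ W.card) (hT : T h W = Bn W.card) : NoK h 5 W := by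
  have IH : ∀ W₀ W' : Finset V, 7 ≤ W'.card → W'.card < W₀.card → T h W' ≤ Bn W'.card :=
    fun _ W' a _ => ex H hF a
  have hodd : ∀ W : Finset V, ∀ k, 4 ≤ k → W.card = 2 * k + 1 → T h W = Bn W.card → NoK h 5 W :=
    fun W k hk hc hT => (odd_step H hF hk hc (IH W)).2 hT.ge
  rcases Nat.even_or_odd' W.card with ⟨k, hk | hk⟩
  · by_cases h4 : k = 4
    · subst h4
      exact noK5_8 H hF hk (by rw [hT, hk]; norm_num [Bn])
    · intro S hSW hS5
      obtain ⟨v, hv, hv'⟩ := exists_mem_notMem_of_card_lt_card (s := S) (t := W) (by omega)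
      have := (even_step H hF (by omega) hk (IH W)).2 hT.ge v hv
      exact hodd (W.erase v) (k - 1) (by omega) (by rw [card_erase_of_mem hv]; omega) this S
        (subset_erase.2 ⟨hSW, hv'⟩) hS5
  · exact hodd W k (by omega) hk hT

lemma eqA {W S : Finset V} (hn : 8 ≤ W.card) (hT : T h W = Bn W.card) (hSW : S ⊆ W)
    (hS4 : S.card = 4) (hS : Clique h S) : ∀ z ∈ W \ S, D h S z = 10 := by
  have h5 := noK5 H hF hn hT
  have hm : (W \ S).card + 4 = W.card := by
    have := card_le_card hSW
    rw [card_sdiff_of_subset hSW, hS4]; omega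
  exact (caseA H hF (by omega) h5 hSW hS hS4 (small_T H hF
      (fun S' hS' => h5 S' (hS'.trans sdiff_subset)) (by omega) rfl
      (fun h7 => ex H hF h7))).2 hT.ge
end
end FanoX


set_option linter.all false
set_option linter.unusedSectionVars false
set_option linter.unusedVariables false
namespace FanoX
open Finset
variable {V : Type*} [DecidableEq V]

def X5 (h : V → V → V → ℤ) (W : Finset V) : Prop :=
  ∀ p ∈ W, ∀ q ∈ W, ∀ r ∈ W, ∀ s ∈ W, ∀ z ∈ W, h p q r = 1 → h p q s = 1 → h p r s = 1 →
    h q r s = 1 → z ≠ p → z ≠ q → z ≠ r → z ≠ s →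
    h p q z + h p r z + h p s z + h q r z + h q s z + h r s z = 5

section
variable {h : V → V → V → ℤ} (H : Hyp h)
include H

lemma Hyp.ne {x y z : V} (e : h x y z = 1) : x ≠ y ∧ x ≠ z ∧ y ≠ z := by
  refine ⟨?_, ?_, ?_⟩ <;> rintro rfl
  · rw [H.d] at e; omega
  · rw [H.d2] at e; omega
  · rw [H.d3] at e; omega

lemma Hyp.pm (x y z : V) : h x z y = h x y z ∧ h y x z = h x y z ∧ h y z x = h x y z ∧
    h z x y = h x y z ∧ h z y x = h x y z := by
  refine ⟨(H.s2 _ _ _).symm, (H.s1 _ _ _).symm, ?_, ?_, ?_⟩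
  · rw [H.s2, H.s1]
  · rw [H.s1, H.s2]
  · rw [H.s1, H.s2, H.s1]

lemma mkX5 (hF : FanoFree h) {W : Finset V} (hn : 8 ≤ W.card) (hT : T h W = Bn W.card) :
    X5 h W := by
  intro p hp q hq r hr s hs z hz e1 e2 e3 e4 n1 n2 n3 n4
  obtain ⟨a1, a2, a3⟩ := H.ne e1
  obtain ⟨b1, b2, b3⟩ := H.ne e2
  obtain ⟨c1, c2, c3⟩ := H.ne e3
  have hc : ({p, q, r, s} : Finset V).card = 4 := by
    rw [card_insert_of_notMem (by simp [*]), card_eq_three.2 ⟨q, r, s, a3, b3, c3, rfl⟩]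
  have hcl : Clique h ({p, q, r, s} : Finset V) := by
    have := H.pm p q r
    have := H.pm p q s
    have := H.pm p r s
    have := H.pm q r s
    intro x hx y hy w hw k1 k2 k3
    simp only [mem_insert, mem_singleton] at hx hy hw
    rcases hx with rfl | rfl | rfl | rfl <;> rcases hy with rfl | rfl | rfl | rfl <;>
      rcases hw with rfl | rfl | rfl | rfl <;> first | omega | exact absurd rfl k1 | exact absurd rfl k2 | exact absurd rfl k3
  have := eqA H hF hn hT (S := {p, q, r, s})
    (by intro x hx; simp only [mem_insert, mem_singleton] at hx; rcases hx with rfl|rfl|rfl|rfl <;> assumption) hc hcl z (by simp [*])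
  rw [D_insert H (by simp [*]), D_insert H (by simp [*]), D_insert H (by simp [*])] at this
  have e : D h {s} z = 0 := by simp [D, H.d3]
  rw [e] at this
  unfold wt at this
  rw [sum_insert (by simp [*]), sum_insert (by simp [*]), sum_insert (by simp [*])] at this
  simp only [sum_singleton] at this
  have := H.pm p q z
  have := H.pm p r z
  have := H.pm p s z
  have := H.pm q r z
  have := H.pm q s z
  have := H.pm r s z
  omega

variable {W : Finset V} (X : X5 h W)
include X

lemma miss {p q r s z : V} (hp : p ∈ W) (hq : q ∈ W) (hr : r ∈ W) (hs : s ∈ W) (hz : z ∈ W)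
    (e1 : h p q r = 1) (e2 : h p q s = 1) (e3 : h p r s = 1) (e4 : h q r s = 1)
    (n1 : z ≠ p) (n2 : z ≠ q) (n3 : z ≠ r) (n4 : z ≠ s) (e : h p q z = 0) :
    h p r z = 1 ∧ h p s z = 1 ∧ h q r z = 1 ∧ h q s z = 1 ∧ h r s z = 1 := by
  have := X p hp q hq r hr s hs z hz e1 e2 e3 e4 n1 n2 n3 n4
  have := H.le1 p r z
  have := H.le1 p s z
  have := H.le1 q r z
  have := H.le1 q s z
  have := H.le1 r s z
  omega

lemma adj {a b c d z z' : V} (ha : a ∈ W) (hb : b ∈ W) (hc : c ∈ W) (hd : d ∈ W) (hz : z ∈ W)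
    (hz' : z' ∈ W)
    (e1 : h a b c = 1) (e2 : h a b d = 1) (e3 : h a c d = 1) (e4 : h b c d = 1)
    (n1 : z ≠ a) (n2 : z ≠ b) (n3 : z ≠ c) (n4 : z ≠ d)
    (m1 : z' ≠ a) (m2 : z' ≠ b) (m3 : z' ≠ c) (m4 : z' ≠ d)
    (e : h a b z = 0) (e' : h a c z' = 0) : False := by
  obtain ⟨f1, f2, f3, f4, f5⟩ := miss H X ha hb hc hd hz e1 e2 e3 e4 n1 n2 n3 n4 e
  have pabc := H.pm a b c
  have pbcd := H.pm b c d
  obtain ⟨g1, g2, g3, g4, g5⟩ := miss H X ha hc hb hd hz' (by omega) e3 e2 (by omega)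
    m1 m3 m2 m4 e'
  have hzz : z' ≠ z := by rintro rfl; omega
  obtain ⟨k1, k2, k3⟩ := H.ne e3
  obtain ⟨k4, k5, k6⟩ := H.ne e4
  obtain ⟨k7, k8, k9⟩ := H.ne e1
  have q1 := H.pm a c z
  have q2 := H.pm a d z
  have q3 := H.pm b c z
  have q4 := H.pm b d z
  have q5 := H.pm c d z
  have q6 := H.pm a b z
  have r1 := H.pm b c z'
  have r2 := H.pm a d z'
  have x1 := miss H X ha hc hz hd hz' (by omega) e3 (by omega) (by omega) m1 m3 hzz m4 e'
  have x2 := X z hz b hb c hc d hd z' hz' (by omega) (by omega) (by omega) e4 hzz m2 m3 m4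
  have t1 := H.pm a z z'
  have t2 := H.pm b z z'
  have t3 := H.pm c z z'
  have t4 := H.pm d z z'
  have x3 := X a ha z hz z' hz' d hd b hb (by omega) (by omega) (by omega) (by omega)
    k7.symm n2.symm m2.symm k5
  have := H.le1 a d b
  have := H.le1 a z' b
  have := H.le1 z d b
  have := H.le1 z' d b
  omega

lemma i1 {a b c d z z' : V} (ha : a ∈ W) (hb : b ∈ W) (hc : c ∈ W) (hd : d ∈ W) (hz : z ∈ W)
    (hz' : z' ∈ W)
    (e1 : h a b c = 1) (e2 : h a b d = 1) (e3 : h a c d = 1) (e4 : h b c d = 1)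
    (n1 : z ≠ a) (n2 : z ≠ b) (n3 : z ≠ c) (n4 : z ≠ d)
    (m1 : z' ≠ a) (m2 : z' ≠ b) (m3 : z' ≠ c) (m4 : z' ≠ d) (hzz : z' ≠ z)
    (e : h a b z = 0) (e' : h a b z' = 0) : h a z z' = 0 := by
  obtain ⟨f1, f2, f3, f4, f5⟩ := miss H X ha hb hc hd hz e1 e2 e3 e4 n1 n2 n3 n4 e
  obtain ⟨g1, g2, g3, g4, g5⟩ := miss H X ha hb hc hd hz' e1 e2 e3 e4 m1 m2 m3 m4 e'
  obtain ⟨k1, k2, k3⟩ := H.ne e3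
  obtain ⟨k4, k5, k6⟩ := H.ne e4
  obtain ⟨k7, k8, k9⟩ := H.ne e1
  have q1 := H.pm a c z
  have q2 := H.pm a d z
  have q5 := H.pm c d z
  have q6 := H.pm a b z
  have r1 := H.pm a c z'
  have r2 := H.pm a d z'
  have r6 := H.pm a b z'
  have t1 := H.pm a z z'
  have t3 := H.pm c z z'
  have t4 := H.pm d z z'
  have x := X z hz a ha c hc d hd z' hz' (by omega) (by omega) (by omega) e3 hzz m1 m3 m4
  rcases H.v a z z' with h0 | h1
  · exact h0
  exfalso
  rcases H.v c z z' with c0 | c1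
  · have x3 := X a ha z hz z' hz' d hd b hb (by omega) (by omega) (by omega) (by omega)
      k7.symm n2.symm m2.symm k5
    have := H.le1 a d b
    have := H.le1 z z' b
    have := H.le1 z d b
    have := H.le1 z' d b
    omega
  · have x3 := X a ha z hz z' hz' c hc b hb (by omega) (by omega) (by omega) (by omega)
      k7.symm n2.symm m2.symm k4
    have := H.le1 a c b
    have := H.le1 z z' b
    have := H.le1 z c b
    have := H.le1 z' c b
    omega

lemma indep {a b c d : V} (ha : a ∈ W) (hb : b ∈ W) (hc : c ∈ W) (hd : d ∈ W)
    (e1 : h a b c = 1) (e2 : h a b d = 1) (e3 : h a c d = 1) (e4 : h b c d = 1) :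
    ∀ x ∈ W, ∀ y ∈ W, ∀ z ∈ W, h a b x = 0 → h a b y = 0 → h a b z = 0 → h x y z = 0 := by
  have pabc := H.pm a b c
  have pabd := H.pm a b d
  have nc : ∀ x, h a b x = 0 → x ≠ c := by rintro x hx rfl; omega
  have nd : ∀ x, h a b x = 0 → x ≠ d := by rintro x hx rfl; omega
  have Za : ∀ x ∈ W, ∀ y ∈ W, h a b x = 0 → h a b y = 0 → h a x y = 0 := by
    intro x hx y hy ex ey
    by_cases xa : x = a
    · rw [xa, H.d]
    by_cases ya : y = a
    · rw [ya, H.d2]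
    by_cases xb : x = b
    · rw [xb]; exact ey
    by_cases yb : y = b
    · rw [yb, H.s2]; exact ex
    by_cases xy : y = x
    · rw [xy, H.d3]
    exact i1 H X ha hb hc hd hx hy e1 e2 e3 e4 xa xb (nc x ex) (nd x ex) ya yb (nc y ey) (nd y ey)
      xy ex ey
  have Zb : ∀ x ∈ W, ∀ y ∈ W, h a b x = 0 → h a b y = 0 → h b x y = 0 := by
    intro x hx y hy ex ey
    by_cases xa : x = b
    · rw [xa, H.d]
    by_cases ya : y = b
    · rw [ya, H.d2]
    by_cases xb : x = a
    · rw [xb, H.s1]; exact ey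
    by_cases yb : y = a
    · rw [yb, H.s2, H.s1]; exact ex
    by_cases xy : y = x
    · rw [xy, H.d3]
    exact i1 H X hb ha hc hd hx hy (by omega) (by omega) e4 e3 xa xb (nc x ex) (nd x ex) ya yb
      (nc y ey) (nd y ey) xy (by rw [H.s1]; exact ex) (by rw [H.s1]; exact ey)
  intro x hx y hy z hz ex ey ez
  by_cases xa : x = a
  · rw [xa]; exact Za y hy z hz ey ez
  by_cases xb : x = b
  · rw [xb]; exact Zb y hy z hz ey ez
  by_cases ya : y = a
  · rw [ya, H.s1]; exact Za x hx z hz ex ez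
  by_cases yb : y = b
  · rw [yb, H.s1]; exact Zb x hx z hz ex ez
  by_cases za : z = a
  · rw [za, H.s2, H.s1]; exact Za x hx y hy ex ey
  by_cases zb : z = b
  · rw [zb, H.s2, H.s1]; exact Zb x hx y hy ex ey
  by_cases xy : y = x
  · rw [xy, H.d]
  by_cases xz : z = x
  · rw [xz, H.d2]
  by_cases yz : z = y
  · rw [yz, H.d3]
  obtain ⟨f1, f2, f3, f4, f5⟩ := miss H X ha hb hc hd hx e1 e2 e3 e4 xa xb (nc x ex) (nd x ex) ex
  have p1 := H.pm a c x
  have p2 := H.pm a d x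
  have p3 := H.pm c d x
  exact i1 H X hx ha hc hd hy hz (by omega) (by omega) (by omega) e3 xy ya (nc y ey) (nd y ey)
    xz za (nc z ez) (nd z ez) yz (by rw [H.s1]; exact Za x hx y hy ex ey)
    (by rw [H.s1]; exact Za x hx z hz ex ez)

lemma struct_aux {a b c d z0 : V} (ha : a ∈ W) (hb : b ∈ W) (hc : c ∈ W) (hd : d ∈ W)
    (hz0 : z0 ∈ W)
    (e1 : h a b c = 1) (e2 : h a b d = 1) (e3 : h a c d = 1) (e4 : h b c d = 1)
    (n1 : z0 ≠ a) (n2 : z0 ≠ b) (n3 : z0 ≠ c) (n4 : z0 ≠ d) (e : h a b z0 = 0) :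
    ∃ P Q : Finset V, Disjoint P Q ∧ P ∪ Q = W ∧
      (∀ x ∈ P, ∀ y ∈ P, ∀ z ∈ P, h x y z = 0) ∧ (∀ x ∈ Q, ∀ y ∈ Q, ∀ z ∈ Q, h x y z = 0) := by
  have p1 := H.pm a b c
  have p2 := H.pm a b d
  have p3 := H.pm a c d
  have p4 := H.pm b c d
  have key : ∀ z ∈ W, (h a b z = 0 ∧ h c d z = 1) ∨ (h a b z = 1 ∧ h c d z = 0) := by
    intro z hz
    by_cases za : z = a
    · rw [za, H.d2]; left; exact ⟨rfl, by omega⟩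
    by_cases zb : z = b
    · rw [zb, H.d3]; left; exact ⟨rfl, by omega⟩
    by_cases zc : z = c
    · rw [zc, H.d2]; right; exact ⟨by omega, rfl⟩
    by_cases zd : z = d
    · rw [zd, H.d3]; right; exact ⟨by omega, rfl⟩
    have x := X a ha b hb c hc d hd z hz e1 e2 e3 e4 za zb zc zd
    have y1 : h a c z ≠ 0 := fun e' =>
      adj H X ha hb hc hd hz0 hz e1 e2 e3 e4 n1 n2 n3 n4 za zb zc zd e e'
    have y2 : h a d z ≠ 0 := fun e' =>
      adj H X ha hb hd hc hz0 hz (by omega) (by omega) (by omega) (by omega) n1 n2 n4 n3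
        za zb zd zc e e'
    have e0 : h b a z0 = 0 := by rw [H.s1]; exact e
    have y3 : h b c z ≠ 0 := fun e' =>
      adj H X hb ha hc hd hz0 hz (by omega) (by omega) (by omega) (by omega) n2 n1 n3 n4
        zb za zc zd e0 e'
    have y4 : h b d z ≠ 0 := fun e' =>
      adj H X hb ha hd hc hz0 hz (by omega) (by omega) (by omega) (by omega) n2 n1 n4 n3
        zb za zd zc e0 e'
    have := H.v a c z
    have := H.v a d z
    have := H.v b c z
    have := H.v b d z
    have := H.v a b z
    have := H.v c d z
    omega
  refine ⟨W.filter (fun z => h a b z = 0), W.filter (fun z => h c d z = 0), ?_, ?_, ?_, ?_⟩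
  · rw [disjoint_left]
    intro z hz hz'
    rw [mem_filter] at hz hz'
    have := key z hz.1
    omega
  · ext z
    simp only [mem_union, mem_filter]
    constructor
    · rintro (k | k) <;> exact k.1
    · intro hz
      rcases key z hz with k | k
      · exact Or.inl ⟨hz, k.1⟩
      · exact Or.inr ⟨hz, k.2⟩
  · intro x hx y hy z hz
    rw [mem_filter] at hx hy hz
    exact indep H X ha hb hc hd e1 e2 e3 e4 x hx.1 y hy.1 z hz.1 hx.2 hy.2 hz.2
  · intro x hx y hy z hz
    rw [mem_filter] at hx hy hz
    exact indep H X hc hd ha hb (by omega) (by omega) (by omega) (by omega)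
      x hx.1 y hy.1 z hz.1 hx.2 hy.2 hz.2

end

lemma structure_thm {h : V → V → V → ℤ} (H : Hyp h) (hF : FanoFree h) {W : Finset V}
    (hn : 8 ≤ W.card) (hT : T h W = Bn W.card) :
    ∃ P Q : Finset V, Disjoint P Q ∧ P ∪ Q = W ∧
      (∀ x ∈ P, ∀ y ∈ P, ∀ z ∈ P, h x y z = 0) ∧ (∀ x ∈ Q, ∀ y ∈ Q, ∀ z ∈ Q, h x y z = 0) := by
  have X := mkX5 H hF hn hT
  obtain ⟨S, hSW, hS4, hS⟩ := exists_K4 H hn hT.ge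
  obtain ⟨z, hz, hz'⟩ := exists_mem_notMem_of_card_lt_card (s := S) (t := W) (by omega)
  obtain ⟨a, R, haR, rfl, hR⟩ := card_eq_succ.1 hS4
  obtain ⟨b, c, d, hbc, hbd, hcd, rfl⟩ := card_eq_three.1 hR
  simp only [mem_insert, mem_singleton, not_or] at haR hz'
  obtain ⟨hab, hac, had⟩ := haR
  obtain ⟨za, zb, zc, zd⟩ := hz'
  have ha := hSW (show a ∈ _ by simp)
  have hb := hSW (show b ∈ _ by simp)
  have hc := hSW (show c ∈ _ by simp)
  have hd := hSW (show d ∈ _ by simp)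
  have e1 : h a b c = 1 := hS _ (by simp) _ (by simp) _ (by simp) hab hac hbc
  have e2 : h a b d = 1 := hS _ (by simp) _ (by simp) _ (by simp) hab had hbd
  have e3 : h a c d = 1 := hS _ (by simp) _ (by simp) _ (by simp) hac had hcd
  have e4 : h b c d = 1 := hS _ (by simp) _ (by simp) _ (by simp) hbc hbd hcd
  have x := X a ha b hb c hc d hd z hz e1 e2 e3 e4 za zb zc zd
  have p1 := H.pm a b c
  have p2 := H.pm a b d
  have p3 := H.pm a c d
  have p4 := H.pm b c d
  rcases H.v a b z with k | k1
  · exact struct_aux H X ha hb hc hd hz (by omega) (by omega) (by omega) (by omega) za zb zc zd k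
  rcases H.v a c z with k | k2
  · exact struct_aux H X ha hc hb hd hz (by omega) (by omega) (by omega) (by omega) za zc zb zd k
  rcases H.v a d z with k | k3
  · exact struct_aux H X ha hd hb hc hz (by omega) (by omega) (by omega) (by omega) za zd zb zc k
  rcases H.v b c z with k | k4
  · exact struct_aux H X hb hc ha hd hz (by omega) (by omega) (by omega) (by omega) zb zc za zd k
  rcases H.v b d z with k | k5
  · exact struct_aux H X hb hd ha hc hz (by omega) (by omega) (by omega) (by omega) zb zd za zc k
  rcases H.v c d z with k | k6
  · exact struct_aux H X hc hd ha hb hz (by omega) (by omega) (by omega) (by omega) zc zd za zb k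
  omega
end FanoX


set_option linter.all false
set_option linter.unusedSectionVars false
set_option linter.unusedVariables false
namespace FanoX
open Finset
variable {V : Type*} [DecidableEq V]

lemma D_full {h : V → V → V → ℤ} (H : Hyp h) {P : Finset V} {z : V}
    (hD : D h P z = P.card * (P.card - 1)) : ∀ x ∈ P, ∀ y ∈ P, x ≠ y → h z x y = 1 := by
  have hle : ∀ i ∈ P ×ˢ P, h z i.1 i.2 ≤ 1 - (if i.1 = i.2 then 1 else 0) := by
    intro i _
    split_ifs with e
    · rw [e, H.d3]; omega
    · have := H.le1 z i.1 i.2; omega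
  have e1 : ∑ i ∈ P ×ˢ P, h z i.1 i.2 = D h P z := by rw [sum_product]; rfl
  have e2 : ∑ i ∈ P ×ˢ P, (1 - (if i.1 = i.2 then 1 else 0) : ℤ) = P.card * (P.card - 1) := by
    rw [sum_product]
    simp [sum_sub_distrib]
    ring
  intro x hx y hy hxy
  have := (sum_eq_sum_iff_of_le hle).1 (by rw [e1, e2, hD]) (x, y) (mem_product.2 ⟨hx, hy⟩)
  simpa [hxy] using this

lemma bal {p q : ℕ} (hle : ((p + q) / 2) * ((p + q + 1) / 2) ≤ p * q) :
    ((p:ℤ) - q).natAbs ≤ 1 ∧ p * q = ((p + q) / 2) * ((p + q + 1) / 2) := by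
  obtain ⟨k, hk⟩ := Nat.even_or_odd' (p + q)
  rcases hk with hk | hk
  · have a1 : (p + q) / 2 = k := by omega
    have a2 : (p + q + 1) / 2 = k := by omega
    rw [a1, a2] at hle ⊢
    have hkz : (p:ℤ) + q = 2 * k := by exact_mod_cast hk
    have hz : (k:ℤ) * k ≤ p * q := by exact_mod_cast hle
    have hpk : (p:ℤ) - k = 0 := by
      have hq : (q:ℤ) = 2 * k - p := by linarith
      rw [hq] at hz
      have : ((p:ℤ) - k) ^ 2 ≤ 0 := by nlinarith
      exact pow_eq_zero_iff (two_ne_zero) |>.1 (le_antisymm this (sq_nonneg _))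
    have h1 : p = k := by omega
    have h2 : q = k := by omega
    subst h1; subst h2
    simp
  · have a1 : (p + q) / 2 = k := by omega
    have a2 : (p + q + 1) / 2 = k + 1 := by omega
    rw [a1, a2] at hle ⊢
    have hkz : (p:ℤ) + q = 2 * k + 1 := by exact_mod_cast hk
    have hz : (k:ℤ) * (k + 1) ≤ p * q := by exact_mod_cast hle
    have hq : (q:ℤ) = 2 * k + 1 - p := by linarith
    rw [hq] at hz
    have h3 : ((p:ℤ) - k) * (p - k - 1) ≤ 0 := by nlinarith
    have : (p:ℤ) - k = 0 ∨ (p:ℤ) - k = 1 := by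
      by_contra hcon
      have : (p:ℤ) - k ≤ -1 ∨ 2 ≤ (p:ℤ) - k := by omega
      rcases this with t | t <;> nlinarith
    rcases this with t | t
    · have h1 : p = k := by omega
      have h2 : q = k + 1 := by omega
      subst h1; subst h2
      refine ⟨by omega, rfl⟩
    · have h1 : p = k + 1 := by omega
      have h2 : q = k := by omega
      subst h1; subst h2
      refine ⟨by omega, by ring⟩

lemma cross {h : V → V → V → ℤ} (H : Hyp h) {P Q : Finset V} (hd : Disjoint P Q)
    (hn : 8 ≤ P.card + Q.card)
    (hP : ∀ x ∈ P, ∀ y ∈ P, ∀ z ∈ P, h x y z = 0) (hQ : ∀ x ∈ Q, ∀ y ∈ Q, ∀ z ∈ Q, h x y z = 0)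
    (hT : T h (P ∪ Q) = Bn (P.card + Q.card)) :
    ((P.card:ℤ) - Q.card).natAbs ≤ 1 ∧ ∀ z ∈ Q, ∀ x ∈ P, ∀ y ∈ P, x ≠ y → h z x y = 1 := by
  have t1 : T h P = 0 := sum_eq_zero fun x hx => sum_eq_zero fun y hy => sum_eq_zero fun z hz =>
    hP x hx y hy z hz
  have t2 : T h Q = 0 := sum_eq_zero fun x hx => sum_eq_zero fun y hy => sum_eq_zero fun z hz =>
    hQ x hx y hy z hz
  have e := T_union H hd
  rw [t1, t2, hT] at e
  have hU := U_le (H.wtA P) (W := Q) (c := P.card) (fun x _ y _ _ => wt_le H P x y)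
  have hD : ∀ z ∈ Q, D h P z ≤ P.card * (P.card - 1) := fun z _ => D_le H P z
  have hs := sum_le_sum hD
  rw [sum_const, nsmul_eq_mul] at hs
  have hn' : (8:ℤ) ≤ P.card + Q.card := by exact_mod_cast hn
  have hBn : Bn (P.card + Q.card) = 3 * (((P.card + Q.card) / 2 * ((P.card + Q.card + 1) / 2) : ℕ) : ℤ)
      * ((P.card:ℤ) + Q.card - 2) := by
    unfold Bn; push_cast; ring
  have hle : (((P.card + Q.card) / 2 * ((P.card + Q.card + 1) / 2) : ℕ) : ℤ) ≤ (P.card * Q.card : ℕ) := by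
    rw [hBn] at e
    push_cast at e ⊢
    refine le_of_mul_le_mul_right (a := 3 * ((P.card:ℤ) + Q.card - 2)) ?_ (by linarith)
    linarith
  obtain ⟨b1, b2⟩ := bal (by exact_mod_cast hle)
  refine ⟨b1, fun z hz => D_full H ?_⟩
  rw [hBn, ← b2] at e
  push_cast at e
  have : ∑ z ∈ Q, D h P z = ∑ z ∈ Q, (P.card * (P.card - 1) : ℤ) := by
    rw [sum_const, nsmul_eq_mul]
    linarith
  exact (sum_eq_sum_iff_of_le hD).1 this z hz

lemma final_h {h : V → V → V → ℤ} (H : Hyp h) (hF : FanoFree h) {W : Finset V}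
    (hn : 8 ≤ W.card) (hT : T h W = Bn W.card) :
    ∃ P Q : Finset V, Disjoint P Q ∧ P ∪ Q = W ∧ ((P.card:ℤ) - Q.card).natAbs ≤ 1 ∧
      (∀ x ∈ P, ∀ y ∈ P, ∀ z ∈ P, h x y z = 0) ∧ (∀ x ∈ Q, ∀ y ∈ Q, ∀ z ∈ Q, h x y z = 0) ∧
      (∀ z ∈ Q, ∀ x ∈ P, ∀ y ∈ P, x ≠ y → h z x y = 1) ∧
      (∀ z ∈ P, ∀ x ∈ Q, ∀ y ∈ Q, x ≠ y → h z x y = 1) := by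
  obtain ⟨P, Q, hd, hu, hP, hQ⟩ := structure_thm H hF hn hT
  have hc : W.card = P.card + Q.card := by rw [← hu, card_union_of_disjoint hd]
  have h1 := cross H hd (by omega) hP hQ (by rw [hu, hT, hc])
  have h2 := cross H hd.symm (by omega) hQ hP (by rw [union_comm, hu, hT, hc, add_comm])
  exact ⟨P, Q, hd, hu, h1.1, hP, hQ, h1.2, h2.2⟩

end FanoX


set_option linter.all false
namespace FanoX
open Finset

lemma c3 (n : ℕ) : 6 * ((n.choose 3 : ℕ) : ℤ) = n * (n - 1) * (n - 2) := by
  induction n with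
  | zero => simp
  | succ n ih =>
    have h2 : 2 * ((n.choose 2 : ℕ) : ℤ) = n * (n - 1) := by
      clear ih
      induction n with
      | zero => simp
      | succ n ih =>
        rw [Nat.choose_succ_succ' n 1]; push_cast; rw [Nat.choose_one_right]; linarith
    rw [Nat.choose_succ_succ' n 2]; push_cast; linarith

lemma b_eq (n : ℕ) (hn : 8 ≤ n) : 6 * ((b n : ℕ) : ℤ) = Bn n := by
  have h1 := c3 n
  have h2 := c3 (n / 2)
  have h3 := c3 ((n + 1) / 2)
  have hk : ((n / 2 : ℕ) : ℤ) + ((n + 1) / 2 : ℕ) = n := by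
    exact_mod_cast (by omega : n / 2 + (n + 1) / 2 = n)
  have e : ((n.choose 3 : ℕ) : ℤ) * 6 - 6 * ((n / 2).choose 3 : ℕ) - 6 * (((n + 1) / 2).choose 3 : ℕ)
      = Bn n := by
    rw [mul_comm, h1, h2, h3]; unfold Bn
    rw [← hk]; ring
  have hpos : 0 ≤ Bn n := by
    unfold Bn
    have : (8:ℤ) ≤ n := by exact_mod_cast hn
    have : (0:ℤ) ≤ n - 2 := by linarith
    positivity
  unfold b
  omega

def hE {n : ℕ} (E : Finset (Finset (Fin n))) (x y z : Fin n) : ℤ :=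
  if ({x, y, z} : Finset (Fin n)) ∈ E then 1 else 0

lemma hypE {n : ℕ} {E : Finset (Finset (Fin n))} (h3 : ∀ e ∈ E, e.card = 3) : Hyp (hE E) where
  s1 x y z := by unfold hE; rw [Finset.insert_comm]
  s2 x y z := by unfold hE; rw [Finset.pair_comm]
  d x y := by
    unfold hE
    rw [if_neg]
    intro hm
    have h1 := h3 _ hm
    have h2 : ({x, x, y} : Finset (Fin n)).card ≤ 2 := by simp; exact card_le_two
    omega
  v x y z := by unfold hE; split_ifs <;> simp

lemma T_single {n : ℕ} (e : Finset (Fin n)) (he : e.card = 3) : T (hE {e}) univ = 6 := by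
  have H : Hyp (hE {e}) := hypE (by simpa using he)
  have hz : ∀ x y z, hE {e} x y z ≠ 0 → x ∈ e ∧ y ∈ e ∧ z ∈ e := by
    intro x y z h0
    unfold hE at h0
    have : ({x, y, z} : Finset (Fin n)) = e := by
      by_contra hc; exact h0 (if_neg (by simpa using hc))
    rw [← this]; simp
  have hcl : Clique (hE {e}) e := by
    intro x hx y hy z hz a b c
    unfold hE
    rw [if_pos]
    rw [mem_singleton]
    apply eq_of_subset_of_card_le
    · intro w hw; simp only [mem_insert, mem_singleton] at hw; rcases hw with rfl | rfl | rfl <;> assumption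
    · rw [he, card_eq_three.2 ⟨x, y, z, a, b, c, rfl⟩]
  have h1 := T_clique H hcl
  rw [he] at h1
  norm_num at h1
  rw [← h1]
  unfold T
  symm
  rw [sum_subset (subset_univ e)]
  · apply sum_congr rfl; intro x _
    rw [sum_subset (subset_univ e)]
    · apply sum_congr rfl; intro y _
      apply sum_subset (subset_univ e)
      intro z _ hz'
      by_contra hc; exact hz' (hz x y z hc).2.2
    · intro y _ hy
      apply sum_eq_zero; intro z _
      by_contra hc; exact hy (hz x y z hc).2.1
  · intro x _ hx
    apply sum_eq_zero; intro y _
    apply sum_eq_zero; intro z _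
    by_contra hc; exact hx (hz x y z hc).1

lemma T_E {n : ℕ} {E : Finset (Finset (Fin n))} (h3 : ∀ e ∈ E, e.card = 3) :
    T (hE E) univ = 6 * E.card := by
  have : ∀ x y z, hE E x y z = ∑ e ∈ E, hE {e} x y z := by
    intro x y z; unfold hE; simp
  unfold T
  simp only [this]
  have : ∀ x y : Fin n, ∑ z, ∑ e ∈ E, hE {e} x y z = ∑ e ∈ E, ∑ z, hE {e} x y z :=
    fun x y => sum_comm
  simp only [this]
  have : ∀ x : Fin n, ∑ y, ∑ e ∈ E, ∑ z, hE {e} x y z = ∑ e ∈ E, ∑ y, ∑ z, hE {e} x y z :=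
    fun x => sum_comm
  simp only [this]
  rw [sum_comm]
  have e6 : ∑ e ∈ E, T (hE {e}) univ = ∑ e ∈ E, 6 := sum_congr rfl fun e he => T_single e (h3 e he)
  unfold T at e6
  rw [e6]
  simp [mul_comm]

lemma ff {n : ℕ} {E : Finset (Finset (Fin n))} (hF : ¬ ContainsFano E) : FanoFree (hE E) := by
  intro v hv
  by_contra hc
  push Not at hc
  apply hF
  refine ⟨v, hv, ?_⟩
  unfold hE at hc
  split_ifs at hc <;> first | (refine ⟨?_, ?_, ?_, ?_, ?_, ?_, ?_⟩ <;> assumption) | (exfalso; norm_num at hc)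

end FanoX

theorem fano_extremal_unique (n : ℕ) (hn : 8 ≤ n) (E : Finset (Finset (Fin n)))
    (h3 : ∀ e ∈ E, e.card = 3) (hcard : E.card = b n) (hF : ¬ ContainsFano E) :
    ∃ X Y : Finset (Fin n), Disjoint X Y ∧ X ∪ Y = Finset.univ ∧
      ((X.card : ℤ) - (Y.card : ℤ)).natAbs ≤ 1 ∧
      ∀ e : Finset (Fin n), e.card = 3 →
        (e ∈ E ↔ (e ∩ X).Nonempty ∧ (e ∩ Y).Nonempty) := by
  have H := FanoX.hypE h3
  obtain ⟨P, Q, hd, hu, hb, hP, hQ, h1, h2⟩ := FanoX.final_h H (FanoX.ff hF)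
    (W := Finset.univ) (by simpa using hn)
    (by rw [FanoX.T_E h3, hcard, FanoX.b_eq n hn]; simp)
  refine ⟨P, Q, hd, hu, hb, fun e he => ?_⟩
  obtain ⟨x, y, z, hxy, hxz, hyz, rfl⟩ := Finset.card_eq_three.1 he
  have hm : ({x, y, z} : Finset (Fin n)) ∈ E ↔ FanoX.hE E x y z = 1 := by
    unfold FanoX.hE; split_ifs with k <;> simp [k]
  have hx : x ∈ P ∨ x ∈ Q := by rw [← Finset.mem_union, hu]; simp
  have hy : y ∈ P ∨ y ∈ Q := by rw [← Finset.mem_union, hu]; simp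
  have hz : z ∈ P ∨ z ∈ Q := by rw [← Finset.mem_union, hu]; simp
  have pm := H.pm x y z
  have hdl := Finset.disjoint_left.1 hd
  rw [hm]
  have ne : ∀ A : Finset (Fin n), (({x, y, z} : Finset (Fin n)) ∩ A).Nonempty ↔
      x ∈ A ∨ y ∈ A ∨ z ∈ A := by
    intro A
    simp only [Finset.Nonempty, Finset.mem_inter, Finset.mem_insert, Finset.mem_singleton]
    constructor
    · rintro ⟨w, rfl | rfl | rfl, hw⟩
      · exact Or.inl hw
      · exact Or.inr (Or.inl hw)
      · exact Or.inr (Or.inr hw)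
    · rintro (k | k | k)
      · exact ⟨x, Or.inl rfl, k⟩
      · exact ⟨y, Or.inr (Or.inl rfl), k⟩
      · exact ⟨z, Or.inr (Or.inr rfl), k⟩
  rw [ne, ne]
  rcases hx with hx | hx <;> rcases hy with hy | hy <;> rcases hz with hz | hz
  · have := hP x hx y hy z hz
    have a := hdl hx; have b := hdl hy; have c := hdl hz
    simp [this, a, b, c]
  · have := h1 z hz x hx y hy hxy
    constructor
    · intro; simp only [hx, hy, hz, true_or, or_true, and_self]
    · intro; omega
  · have := h1 y hy x hx z hz hxz
    constructor
    · intro; simp only [hx, hy, hz, true_or, or_true, and_self]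
    · intro; omega
  · have := h2 x hx y hy z hz hyz
    constructor
    · intro; simp only [hx, hy, hz, true_or, or_true, and_self]
    · intro; omega
  · have := h1 x hx y hy z hz hyz
    constructor
    · intro; simp only [hx, hy, hz, true_or, or_true, and_self]
    · intro; omega
  · have := h2 y hy x hx z hz hxz
    constructor
    · intro; simp only [hx, hy, hz, true_or, or_true, and_self]
    · intro; omega
  · have := h2 z hz x hx y hy hxy
    constructor
    · intro; simp only [hx, hy, hz, true_or, or_true, and_self]
    · intro; omega
  · have := hQ x hx y hy z hz
    have a : x ∉ P := fun k => hdl k hx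
    have b : y ∉ P := fun k => hdl k hy
    have c : z ∉ P := fun k => hdl k hz
    simp [this, a, b, c]
end

section
/- Every 3-uniform hypergraph H on 7 vertices with exactly 30 edges that does not contain the Fano plane is isomorphic either to B_7 or to J_7. Equivalently, either there is a partition of the vertex set into sets X and Y of sizes 3 and 4 such that the edges of H are exactly the triples meeting both X and Y, or there are two distinct vertices x, y such that the edges of H are exactly the triples not containing both x and y. -/
def tripleMasks : List ℕ := [7, 11, 19, 35, 67, 13, 21, 37, 69, 25, 41, 73, 49, 81, 97, 14, 22, 38, 70, 26, 42, 74, 50, 82, 98, 28, 44, 76, 52, 84, 100, 56, 88, 104, 112]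

def planeVerts : List (List (Fin 7)) :=
  [[0, 1, 2, 3, 4, 5, 6],
   [0, 1, 2, 3, 4, 6, 5],
   [0, 1, 2, 3, 5, 4, 6],
   [0, 1, 2, 3, 5, 6, 4],
   [0, 1, 2, 3, 6, 4, 5],
   [0, 1, 2, 3, 6, 5, 4],
   [0, 1, 3, 2, 4, 5, 6],
   [0, 1, 3, 2, 4, 6, 5],
   [0, 1, 3, 2, 5, 4, 6],
   [0, 1, 3, 2, 5, 6, 4],
   [0, 1, 3, 2, 6, 4, 5],
   [0, 1, 3, 2, 6, 5, 4],
   [0, 1, 4, 2, 3, 5, 6],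
   [0, 1, 4, 2, 3, 6, 5],
   [0, 1, 4, 2, 5, 3, 6],
   [0, 1, 4, 2, 5, 6, 3],
   [0, 1, 4, 2, 6, 3, 5],
   [0, 1, 4, 2, 6, 5, 3],
   [0, 1, 5, 2, 3, 4, 6],
   [0, 1, 5, 2, 3, 6, 4],
   [0, 1, 5, 2, 4, 3, 6],
   [0, 1, 5, 2, 4, 6, 3],
   [0, 1, 5, 2, 6, 3, 4],
   [0, 1, 5, 2, 6, 4, 3],
   [0, 1, 6, 2, 3, 4, 5],
   [0, 1, 6, 2, 3, 5, 4],
   [0, 1, 6, 2, 4, 3, 5],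
   [0, 1, 6, 2, 4, 5, 3],
   [0, 1, 6, 2, 5, 3, 4],
   [0, 1, 6, 2, 5, 4, 3]]

def planeLines : List (List (Fin 35)) :=
  [[0, 25, 12, 11, 30, 23, 20],
   [0, 25, 13, 10, 30, 22, 21],
   [0, 26, 12, 11, 29, 24, 19],
   [0, 26, 14, 9, 29, 22, 21],
   [0, 27, 13, 10, 28, 24, 19],
   [0, 27, 14, 9, 28, 23, 20],
   [1, 25, 12, 8, 33, 23, 17],
   [1, 25, 13, 7, 33, 22, 18],
   [1, 26, 12, 8, 32, 24, 16],
   [1, 26, 14, 6, 32, 22, 18],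
   [1, 27, 13, 7, 31, 24, 16],
   [1, 27, 14, 6, 31, 23, 17],
   [2, 25, 10, 8, 34, 21, 17],
   [2, 25, 11, 7, 34, 20, 18],
   [2, 28, 10, 8, 32, 24, 15],
   [2, 28, 14, 5, 32, 20, 18],
   [2, 29, 11, 7, 31, 24, 15],
   [2, 29, 14, 5, 31, 21, 17],
   [3, 26, 9, 8, 34, 21, 16],
   [3, 26, 11, 6, 34, 19, 18],
   [3, 28, 9, 8, 33, 23, 15],
   [3, 28, 13, 5, 33, 19, 18],
   [3, 30, 11, 6, 31, 23, 15],
   [3, 30, 13, 5, 31, 21, 16],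
   [4, 27, 9, 7, 34, 20, 16],
   [4, 27, 10, 6, 34, 19, 17],
   [4, 29, 9, 7, 33, 22, 15],
   [4, 29, 12, 5, 33, 19, 17],
   [4, 30, 10, 6, 32, 22, 15],
   [4, 30, 12, 5, 32, 20, 16]]

def tm (t : Fin 35) : ℕ := tripleMasks.getD t.val 0

def tr (t : Fin 35) : Finset (Fin 7) := Finset.univ.filter fun i => (tm t).testBit i.val = true

def pv (k : Fin 30) (i : Fin 7) : Fin 7 := (planeVerts.getD k.val []).getD i.val 0

def pl (k : Fin 30) (i : Fin 7) : Fin 35 := (planeLines.getD k.val []).getD i.val 0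

def inPl (k : Fin 30) (t : Fin 35) : Bool := (planeLines.getD k.val []).any fun s => s.val.beq t.val

def compat (s t : Fin 35) : Bool :=
  let m := (tm s) &&& (tm t)
  m.beq 0 || !((m &&& (m - 1)).beq 0)

def inJ (x y : Fin 7) (t : Fin 35) : Bool := (tm t).testBit x.val && (tm t).testBit y.val

def inB (X t : Fin 35) : Bool := X.val.beq t.val || ((tm X) &&& (tm t)).beq 0

def concl (a b c d e : Fin 35) : Bool :=
  ((List.finRange 7).any fun x => (List.finRange 7).any fun y => !(x.val.beq y.val) &&
    inJ x y a && inJ x y b && inJ x y c && inJ x y d && inJ x y e) ||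
  ((List.finRange 35).any fun X => inB X a && inB X b && inB X c && inB X d && inB X e)

lemma tr_card : ∀ t, (tr t).card = 3 := by decide +kernel
lemma tr_inj : Function.Injective tr := by
  have : ∀ s t, tr s = tr t → s = t := by decide +kernel
  exact fun s t => this s t
lemma tr_surj (s : Finset (Fin 7)) (hs : s.card = 3) : ∃ t, tr t = s := by
  have : ∀ s ∈ Finset.powersetCard 3 (Finset.univ : Finset (Fin 7)), ∃ t, tr t = s := by
    decide +kernel
  exact this s (by simp [hs])
lemma pv_inj (k : Fin 30) : Function.Injective (pv k) := by
  have : ∀ k i j, pv k i = pv k j → i = j := by decide +kernel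
  exact fun i j => this k i j
lemma pl_spec : ∀ k : Fin 30,
    ({pv k 0, pv k 1, pv k 2} : Finset (Fin 7)) = tr (pl k 0) ∧
    ({pv k 2, pv k 3, pv k 4} : Finset (Fin 7)) = tr (pl k 1) ∧
    ({pv k 0, pv k 4, pv k 5} : Finset (Fin 7)) = tr (pl k 2) ∧
    ({pv k 0, pv k 3, pv k 6} : Finset (Fin 7)) = tr (pl k 3) ∧
    ({pv k 2, pv k 5, pv k 6} : Finset (Fin 7)) = tr (pl k 4) ∧
    ({pv k 1, pv k 4, pv k 6} : Finset (Fin 7)) = tr (pl k 5) ∧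
    ({pv k 1, pv k 3, pv k 5} : Finset (Fin 7)) = tr (pl k 6) := by decide +kernel
lemma inPl_pl : ∀ k i, inPl k (pl k i) = true := by decide +kernel
lemma deg_six : ∀ t, (Finset.univ.filter fun k => inPl k t = true).card = 6 := by decide +kernel
lemma compat_spec : ∀ s t, compat s t = false → s ≠ t → ∃ k, inPl k s = true ∧ inPl k t = true := by
  decide +kernel
lemma J_card : ∀ x y, x ≠ y → (Finset.univ.filter fun t => inJ x y t = true).card = 5 := by
  decide +kernel
lemma B_card : ∀ X, (Finset.univ.filter fun t => inB X t = true).card = 5 := by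
  decide +kernel
lemma B_spec : ∀ X t, inB X t = false ↔ (tr t ∩ tr X).Nonempty ∧ (tr t ∩ (tr X)ᶜ).Nonempty := by
  decide +kernel
lemma cliques : ∀ a b : Fin 35, a < b → compat a b = true →
    ∀ c, b < c → compat a c = true → compat b c = true →
    ∀ d, c < d → compat a d = true → compat b d = true → compat c d = true →
    ∀ e, d < e → compat a e = true → compat b e = true → compat c e = true → compat d e = true →
    concl a b c d e = true := by decide +kernel

lemma structure_lemma (M : Finset (Fin 35)) (hM : M.card = 5)
    (hc : ∀ s ∈ M, ∀ t ∈ M, s ≠ t → compat s t = true) :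
    (∃ x y : Fin 7, x ≠ y ∧ ∀ t, t ∈ M ↔ inJ x y t = true) ∨
    (∃ X, ∀ t, t ∈ M ↔ inB X t = true) := by
  have key : ∀ p : Fin 35 → Bool, (Finset.univ.filter fun t => p t = true).card = 5 →
      (∀ i : Fin 5, p (M.orderEmbOfFin hM i) = true) → ∀ t, t ∈ M ↔ p t = true := by
    intro p hp hi
    have hsub : M ⊆ Finset.univ.filter fun t => p t = true := by
      intro t ht
      have : t ∈ Set.range (M.orderEmbOfFin hM) := by
        rw [Finset.range_orderEmbOfFin]; exact ht
      obtain ⟨i, rfl⟩ := this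
      simp [hi i]
    have := Finset.eq_of_subset_of_card_le hsub (by rw [hp, hM])
    intro t
    rw [this]; simp
  have lt : ∀ i j : Fin 5, i < j → M.orderEmbOfFin hM i < M.orderEmbOfFin hM j :=
    fun i j h => (M.orderEmbOfFin hM).strictMono h
  have cp : ∀ i j : Fin 5, i < j →
      compat (M.orderEmbOfFin hM i) (M.orderEmbOfFin hM j) = true :=
    fun i j h => hc _ (Finset.orderEmbOfFin_mem _ _ _) _ (Finset.orderEmbOfFin_mem _ _ _)
      (lt i j h).ne
  have := cliques _ _ (lt 0 1 (by decide)) (cp 0 1 (by decide))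
    _ (lt 1 2 (by decide)) (cp 0 2 (by decide)) (cp 1 2 (by decide))
    _ (lt 2 3 (by decide)) (cp 0 3 (by decide)) (cp 1 3 (by decide)) (cp 2 3 (by decide))
    _ (lt 3 4 (by decide)) (cp 0 4 (by decide)) (cp 1 4 (by decide)) (cp 2 4 (by decide))
      (cp 3 4 (by decide))
  simp only [concl, Bool.or_eq_true, List.any_eq_true, Bool.and_eq_true] at this
  rcases this with ⟨x, -, y, -, ⟨⟨⟨⟨⟨h, h0⟩, h1⟩, h2⟩, h3⟩, h4⟩⟩ | ⟨X, -, ⟨⟨⟨⟨h0, h1⟩, h2⟩, h3⟩, h4⟩⟩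
  · left
    have hxy : x ≠ y := by
      rintro rfl
      simp at h
    refine ⟨x, y, hxy, key _ (J_card x y hxy) ?_⟩
    intro i; fin_cases i <;> assumption
  · right
    refine ⟨X, key _ (B_card X) ?_⟩
    intro i; fin_cases i <;> assumption

lemma cover_lemma (M : Finset (Fin 35)) (hM : M.card = 5)
    (hcov : ∀ k, ∃ t ∈ M, inPl k t = true) :
    ∀ s ∈ M, ∀ t ∈ M, s ≠ t → compat s t = true := by
  intro s hs t ht hst
  by_contra hcon
  obtain ⟨k, hk1, hk2⟩ := compat_spec s t (by simpa using hcon) hst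
  have hsum : ∑ k : Fin 30, (M.filter fun t => inPl k t = true).card
      = ∑ t ∈ M, (Finset.univ.filter fun k => inPl k t = true).card :=
    Finset.sum_card_bipartiteAbove_eq_sum_card_bipartiteBelow (fun k t => inPl k t = true)
  simp only [deg_six, Finset.sum_const, hM] at hsum
  have hlt : ∑ k : Fin 30, 1 < ∑ k : Fin 30, (M.filter fun t => inPl k t = true).card := by
    apply Finset.sum_lt_sum
    · intro k _
      obtain ⟨t, ht, h⟩ := hcov k
      exact Finset.card_pos.mpr ⟨t, by simp [ht, h]⟩
    · exact ⟨k, Finset.mem_univ _, Finset.one_lt_card.mpr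
        ⟨s, by simp [hs, hk1], t, by simp [ht, hk2], hst⟩⟩
  rw [hsum] at hlt
  simp at hlt

/-- Every Fano-free hypergraph on `7` vertices with `30` edges is isomorphic to
`B_7` or to `J_7`. -/
theorem fano_extremal_seven (E : Finset (Finset (Fin 7))) (h3 : ∀ e ∈ E, e.card = 3)
    (hcard : E.card = 30) (hF : ¬ ContainsFano E) :
    (∃ X Y : Finset (Fin 7), Disjoint X Y ∧ X ∪ Y = Finset.univ ∧
      X.card = 3 ∧ Y.card = 4 ∧
      ∀ e : Finset (Fin 7), e.card = 3 →
        (e ∈ E ↔ (e ∩ X).Nonempty ∧ (e ∩ Y).Nonempty)) ∨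
    (∃ x y : Fin 7, x ≠ y ∧
      ∀ e : Finset (Fin 7), e.card = 3 → (e ∈ E ↔ ¬ (x ∈ e ∧ y ∈ e))) := by
  classical
  set M : Finset (Fin 35) := Finset.univ.filter fun t => tr t ∉ E with hMdef
  have memM : ∀ t, t ∈ M ↔ tr t ∉ E := by intro t; simp [hMdef]
  have hM : M.card = 5 := by
    have h1 : (Finset.univ.filter fun t => tr t ∈ E).card = 30 := by
      rw [← hcard, ← Finset.card_image_of_injective _ tr_inj]
      congr 1
      ext s
      simp only [Finset.mem_image, Finset.mem_filter, Finset.mem_univ, true_and]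
      constructor
      · rintro ⟨t, ht, rfl⟩; exact ht
      · intro hs
        obtain ⟨t, rfl⟩ := tr_surj s (h3 s hs)
        exact ⟨t, hs, rfl⟩
    have h2 := Finset.card_filter_add_card_filter_not (s := (Finset.univ : Finset (Fin 35)))
      (fun t => tr t ∈ E)
    rw [h1, Finset.card_univ, Fintype.card_fin] at h2
    have h4 : M.card = (Finset.univ.filter fun t => ¬ tr t ∈ E).card := by
      rw [hMdef]
    omega
  have hcov : ∀ k, ∃ t ∈ M, inPl k t = true := by
    intro k
    by_contra hno
    push Not at hno
    have hin : ∀ i, tr (pl k i) ∈ E := by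
      intro i
      by_contra hi
      exact hno _ ((memM _).2 hi) (inPl_pl k i)
    obtain ⟨e0, e1, e2, e3, e4, e5, e6⟩ := pl_spec k
    refine hF ⟨pv k, pv_inj k, ?_, ?_, ?_, ?_, ?_, ?_, ?_⟩
    · rw [e0]; exact hin _
    · rw [e1]; exact hin _
    · rw [e2]; exact hin _
    · rw [e3]; exact hin _
    · rw [e4]; exact hin _
    · rw [e5]; exact hin _
    · rw [e6]; exact hin _
  rcases structure_lemma M hM (cover_lemma M hM hcov) with ⟨x, y, hxy, h⟩ | ⟨X, h⟩
  · right
    refine ⟨x, y, hxy, ?_⟩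
    intro s hs
    obtain ⟨t, rfl⟩ := tr_surj s hs
    have := h t
    rw [memM] at this
    rw [← not_iff_not, this]
    simp [inJ, tr]
  · left
    refine ⟨tr X, (tr X)ᶜ, disjoint_compl_right, ?_, tr_card X, ?_, ?_⟩
    · simp
    · rw [Finset.card_compl, tr_card]; rfl
    · intro s hs
      obtain ⟨t, rfl⟩ := tr_surj s hs
      have := h t
      rw [memM] at this
      rw [← B_spec, ← not_iff_not, this]
      simp
end

section
/- For every n, the balanced, complete, bipartite 3-uniform hypergraph B_n does not contain the Fano plane: if X and Y partition an n-element vertex set and E is the set of all 3-element subsets intersecting both X and Y, then the hypergraph (X ∪ Y, E) contains no Fano plane. -/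
theorem two_colors_aux {α : Type*} [DecidableEq α] (X Y : Finset α) (hdisj : Disjoint X Y)
    (a b c : α) (h : ({a, b, c} : Finset α) ∈ ((X ∪ Y).powersetCard 3).filter
      (fun e => (e ∩ X).Nonempty ∧ (e ∩ Y).Nonempty)) :
    (a ∈ X ∨ b ∈ X ∨ c ∈ X) ∧ (a ∉ X ∨ b ∉ X ∨ c ∉ X) := by
  obtain ⟨-, ⟨x, hx⟩, ⟨y, hy⟩⟩ := Finset.mem_filter.1 h
  simp only [Finset.mem_inter, Finset.mem_insert, Finset.mem_singleton] at hx hy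
  have hyX : y ∉ X := fun hh => Finset.disjoint_left.1 hdisj hh hy.2
  constructor
  · rcases hx with ⟨rfl | rfl | rfl, hx⟩ <;> simp [hx]
  · rcases hy with ⟨rfl | rfl | rfl, hy⟩ <;> simp [hyX]

/-- The complete bipartite `3`-uniform hypergraph with parts `X` and `Y` contains
no Fano plane. -/
theorem bipartite_fano_free {α : Type*} [DecidableEq α] (n : ℕ) (X Y : Finset α)
    (hdisj : Disjoint X Y) (hcard : (X ∪ Y).card = n) :
    ¬ ContainsFano (((X ∪ Y).powersetCard 3).filter
      (fun e => (e ∩ X).Nonempty ∧ (e ∩ Y).Nonempty)) := by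
  rintro ⟨v, -, h1, h2, h3, h4, h5, h6, h7⟩
  replace h1 := two_colors_aux X Y hdisj _ _ _ h1
  replace h2 := two_colors_aux X Y hdisj _ _ _ h2
  replace h3 := two_colors_aux X Y hdisj _ _ _ h3
  replace h4 := two_colors_aux X Y hdisj _ _ _ h4
  replace h5 := two_colors_aux X Y hdisj _ _ _ h5
  replace h6 := two_colors_aux X Y hdisj _ _ _ h6
  replace h7 := two_colors_aux X Y hdisj _ _ _ h7
  by_cases c0 : v 0 ∈ X <;> by_cases c1 : v 1 ∈ X <;> by_cases c2 : v 2 ∈ X <;>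
    by_cases c3 : v 3 ∈ X <;> simp_all
end

section
/- The hypergraph J_7, obtained from the complete 3-uniform hypergraph on 7 vertices by deleting all five triples that contain a fixed pair of vertices, has exactly 30 edges and does not contain the Fano plane. -/
/-- The hypergraph `J_7`, obtained from the complete `3`-uniform hypergraph on `7`
vertices by deleting the five triples containing the fixed pair `{x, y}`, has `30`
edges and contains no Fano plane. -/
theorem J7_fano_free (x y : Fin 7) (hxy : x ≠ y) :
    (((Finset.univ : Finset (Fin 7)).powersetCard 3).filter
        (fun e => ¬ (x ∈ e ∧ y ∈ e))).card = 30 ∧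
    ¬ ContainsFano (((Finset.univ : Finset (Fin 7)).powersetCard 3).filter
        (fun e => ¬ (x ∈ e ∧ y ∈ e))) := by
  constructor
  · revert x y
    decide +kernel
  · rintro ⟨v, hv, h1, h2, h3, h4, h5, h6, h7⟩
    have hs : Function.Surjective v := Finite.surjective_of_injective hv
    obtain ⟨i, rfl⟩ := hs x
    obtain ⟨j, rfl⟩ := hs y
    have hij : i ≠ j := fun h => hxy (by rw [h])
    simp only [Finset.mem_filter, Finset.mem_insert, Finset.mem_singleton, hv.eq_iff]
      at h1 h2 h3 h4 h5 h6 h7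
    replace h1 := h1.2
    replace h2 := h2.2
    replace h3 := h3.2
    replace h4 := h4.2
    replace h5 := h5.2
    replace h6 := h6.2
    replace h7 := h7.2
    clear hxy hs hv
    clear v
    fin_cases i <;> fin_cases j <;> simp at hij h1 h2 h3 h4 h5 h6 h7
end

section
/- For every integer n ≥ 4, every 3-uniform hypergraph on n vertices with at least b(n) edges contains a tetrahedron, i.e., four distinct vertices all four of whose 3-element subsets are edges. -/
lemma six_choose (m : ℕ) : (m+2).choose 3 * 6 = (m+2)*(m+1)*m := by
  induction m with
  | zero => rfl
  | succ k ih =>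
    have h2 : (k+2).choose 2 * 2 = (k+2)*(k+1) := by
      have := Nat.add_one_mul_choose_eq (k+1) 1
      simp at this
      linarith
    have h : (k+1+2).choose 3 = (k+2).choose 2 + (k+2).choose 3 := Nat.choose_succ_succ _ _
    rw [h]
    nlinarith

lemma b_big (n : ℕ) (hn : 4 ≤ n) : 3 * n.choose 3 < 4 * b n := by
  unfold b
  obtain ⟨k, rfl | rfl⟩ := Nat.even_or_odd' n
  · obtain ⟨j, rfl⟩ : ∃ j, k = j + 2 := ⟨k - 2, by omega⟩
    have e1 : 2 * (j+2) / 2 = j + 2 := by omega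
    have e2 : (2 * (j+2) + 1) / 2 = j + 2 := by omega
    rw [e1, e2]
    have h1 := six_choose j
    have h2 := six_choose (2*j+2)
    have e3 : 2*j+2+2 = 2*(j+2) := by ring
    rw [e3] at h2
    have : 4 * ((j+2).choose 3 + (j+2).choose 3) < (2*(j+2)).choose 3 := by nlinarith
    omega
  · obtain ⟨j, rfl⟩ : ∃ j, k = j + 2 := ⟨k - 2, by omega⟩
    have e1 : (2 * (j+2) + 1) / 2 = j + 2 := by omega
    have e2 : (2 * (j+2) + 1 + 1) / 2 = j + 1 + 2 := by omega
    rw [e1, e2]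
    have h1 := six_choose j
    have h1' := six_choose (j+1)
    have h2 := six_choose (2*j+3)
    have e3 : 2*j+3+2 = 2*(j+2)+1 := by ring
    rw [e3] at h2
    have : 4 * ((j+2).choose 3 + (j+1+2).choose 3) < (2*(j+2)+1).choose 3 := by nlinarith
    omega

/-- For `n ≥ 4`, every `3`-uniform hypergraph on `n` vertices with at least `b n` edges
contains a tetrahedron. -/
theorem tetrahedron_of_b_edges (n : ℕ) (hn : 4 ≤ n) (E : Finset (Finset (Fin n)))
    (h3 : ∀ e ∈ E, e.card = 3) (hcard : b n ≤ E.card) :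
    ∃ w x y z : Fin n, w ≠ x ∧ w ≠ y ∧ w ≠ z ∧ x ≠ y ∧ x ≠ z ∧ y ≠ z ∧
      ({w, x, y} : Finset (Fin n)) ∈ E ∧ ({w, x, z} : Finset (Fin n)) ∈ E ∧
      ({w, y, z} : Finset (Fin n)) ∈ E ∧ ({x, y, z} : Finset (Fin n)) ∈ E := by
  by_contra hno
  have key : E.card * (n - 3) ≤ (Finset.powersetCard 4 (Finset.univ : Finset (Fin n))).card * 3 := by
    refine Finset.card_mul_le_card_mul (fun e F => e ⊆ F) (fun e he => ?_) (fun F hF => ?_)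
    · have hc : eᶜ.card = n - 3 := by
        rw [Finset.card_compl, h3 e he, Fintype.card_fin]
      rw [← hc]
      refine Finset.card_le_card_of_injOn (fun a => insert a e) ?_ ?_
      · intro a ha
        have ha' : a ∉ e := by simpa using ha
        simp [Finset.mem_bipartiteAbove, Finset.mem_powersetCard, ha', h3 e he]
      · intro a ha c hc h
        have ha' : a ∉ e := by simpa using ha
        have : a ∈ insert c e := by
          rw [← show insert a e = insert c e from h]; exact Finset.mem_insert_self _ _
        rcases Finset.mem_insert.1 this with h | h
        · exact h
        · exact absurd h ha'
    · by_contra hlt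
      have hF4 : F.card = 4 := (Finset.mem_powersetCard.1 hF).2
      have hsub : E.bipartiteBelow (fun e F => e ⊆ F) F ⊆ F.powersetCard 3 := by
        intro e he
        rw [Finset.mem_bipartiteBelow] at he
        exact Finset.mem_powersetCard.2 ⟨he.2, h3 e he.1⟩
      have heq := Finset.eq_of_subset_of_card_le hsub (by
        rw [Finset.card_powersetCard, hF4]
        have : Nat.choose 4 3 = 4 := rfl
        omega)
      have hall : ∀ e, e ⊆ F → e.card = 3 → e ∈ E := by
        intro e h1 h2
        have : e ∈ F.powersetCard 3 := Finset.mem_powersetCard.2 ⟨h1, h2⟩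
        rw [← heq, Finset.mem_bipartiteBelow] at this
        exact this.1
      obtain ⟨w, G, hw, rfl, hG⟩ := Finset.card_eq_succ.1 hF4
      obtain ⟨x, y, z, hxy, hxz, hyz, rfl⟩ := Finset.card_eq_three.1 hG
      simp only [Finset.mem_insert, Finset.mem_singleton, not_or] at hw
      obtain ⟨hwx, hwy, hwz⟩ := hw
      refine hno ⟨w, x, y, z, hwx, hwy, hwz, hxy, hxz, hyz, ?_, ?_, ?_, ?_⟩
      all_goals
        apply hall
        · intro a
          simp only [Finset.mem_insert, Finset.mem_singleton]
          tauto
        · exact Finset.card_eq_three.2 ⟨_, _, _, by assumption, by assumption, by assumption, rfl⟩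
  rw [Finset.card_powersetCard, Finset.card_univ, Fintype.card_fin] at key
  have h4 : n.choose 4 * 4 = n.choose 3 * (n - 3) := Nat.choose_succ_right_eq n 3
  have hb := b_big n hn
  have : 0 < n - 3 := by omega
  have : 4 * E.card ≤ 3 * n.choose 3 := by
    refine Nat.le_of_mul_le_mul_right ?_ this
    nlinarith
  omega
end

section
/- Let H be a 3-uniform hypergraph on 7 vertices not containing the Fano plane. If some vertex v of H lies in at least 11 edges and the induced subhypergraph of H on the remaining 6 vertices has at least 18 edges, then that induced subhypergraph on the 6 vertices other than v is isomorphic to B_6; that is, its 6-element vertex set can be partitioned into two 3-element sets X and Y such that its edges are exactly the triples meeting both X and Y. -/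
def MT : Fin 15 → Fin 6 → Fin 6 :=
  ![![0,1,4,2,3,5],
    ![0,1,3,2,4,5],
    ![0,1,3,2,5,4],
    ![0,2,4,1,3,5],
    ![0,2,3,1,4,5],
    ![0,2,3,1,5,4],
    ![0,3,4,1,2,5],
    ![0,3,2,1,4,5],
    ![0,3,2,1,5,4],
    ![0,4,3,1,2,5],
    ![0,4,2,1,3,5],
    ![0,4,2,1,5,3],
    ![0,5,3,1,2,4],
    ![0,5,2,1,3,4],
    ![0,5,2,1,4,3]]

def pr (w : Fin 6 → Fin 6) : Finset (Finset (Fin 6)) :=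
  {{w 0, w 1}, {w 3, w 4}, {w 2, w 5}}

def c1 (w : Fin 6 → Fin 6) : Finset (Finset (Fin 6)) :=
  {{w 1, w 2, w 3}, {w 1, w 4, w 5}, {w 0, w 3, w 5}, {w 0, w 2, w 4}}

def c2 (w : Fin 6 → Fin 6) : Finset (Finset (Fin 6)) :=
  {{w 0, w 2, w 3}, {w 0, w 4, w 5}, {w 1, w 3, w 5}, {w 1, w 2, w 4}}

lemma MT_inj : ∀ m, Function.Injective (MT m) := by decide +kernel

lemma pr_deg : ∀ p ∈ Finset.powersetCard 2 (Finset.univ : Finset (Fin 6)),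
    (Finset.univ.filter (fun m => p ∈ pr (MT m))).card ≤ 3 := by decide +kernel

lemma pr_two : ∀ m, ∀ p ∈ pr (MT m), p ∈ Finset.powersetCard 2 (Finset.univ : Finset (Fin 6)) := by
  decide +kernel

lemma c_three : ∀ m, ∀ p ∈ c1 (MT m) ∪ c2 (MT m),
    p ∈ Finset.powersetCard 3 (Finset.univ : Finset (Fin 6)) := by
  decide +kernel

lemma key : ∀ A ∈ Finset.powersetCard 3 (Finset.univ : Finset (Fin 6)),
    ∀ B ∈ Finset.powersetCard 3 (Finset.univ : Finset (Fin 6)),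
    3 ≤ (Finset.univ.filter (fun m => (A ∈ c1 (MT m) ∨ B ∈ c1 (MT m)) ∧
      (A ∈ c2 (MT m) ∨ B ∈ c2 (MT m)))).card → B = Aᶜ := by decide +kernel

lemma fin_sep : ∀ p ∈ Finset.powersetCard 3 (Finset.univ : Finset (Fin 6)),
    ∀ A ∈ Finset.powersetCard 3 (Finset.univ : Finset (Fin 6)),
    ((p ≠ A ∧ p ≠ Aᶜ) ↔ (p ∩ A).Nonempty ∧ (p ∩ Aᶜ).Nonempty) := by decide +kernel

lemma pull2 : ∀ v : Fin 7, ∀ e ∈ Finset.powersetCard 3 (Finset.univ : Finset (Fin 7)), v ∈ e →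
    ∃ p ∈ Finset.powersetCard 2 (Finset.univ : Finset (Fin 6)),
      insert v (p.image v.succAbove) = e := by decide +kernel

lemma pull3 : ∀ v : Fin 7, ∀ e ∈ Finset.powersetCard 3 (Finset.univ : Finset (Fin 7)), v ∉ e →
    ∃ p ∈ Finset.powersetCard 3 (Finset.univ : Finset (Fin 6)),
      p.image v.succAbove = e := by decide +kernel

lemma fano_of (E : Finset (Finset (Fin 7))) (v : Fin 7) (w : Fin 6 → Fin 6)
    (hw : Function.Injective w)
    (h2 : ∀ p ∈ pr w, insert v (p.image v.succAbove) ∈ E)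
    (h3 : ∀ p ∈ c1 w, p.image v.succAbove ∈ E) : ContainsFano E := by
  refine ⟨Fin.cons v (v.succAbove ∘ w), ?_, ?_⟩
  · rw [Fin.cons_injective_iff]
    refine ⟨?_, Fin.succAbove_right_injective.comp hw⟩
    rintro ⟨i, hi⟩
    exact Fin.succAbove_ne v _ hi
  · simp only [pr, c1, Finset.mem_insert, Finset.mem_singleton, forall_eq_or_imp, forall_eq,
      Finset.image_insert, Finset.image_singleton] at h2 h3
    obtain ⟨a, b, c⟩ := h2
    obtain ⟨d, e, f, g⟩ := h3
    exact ⟨a, d, b, c, e, f, g⟩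

lemma swap_eqs (w : Fin 6 → Fin 6) :
    pr (w ∘ Equiv.swap 0 1) = pr w ∧ c1 (w ∘ Equiv.swap 0 1) = c2 w := by
  have h0 : (Equiv.swap (0 : Fin 6) 1) 0 = 1 := by decide
  have h1 : (Equiv.swap (0 : Fin 6) 1) 1 = 0 := by decide
  have h2 : (Equiv.swap (0 : Fin 6) 1) 2 = 2 := by decide
  have h3 : (Equiv.swap (0 : Fin 6) 1) 3 = 3 := by decide
  have h4 : (Equiv.swap (0 : Fin 6) 1) 4 = 4 := by decide
  have h5 : (Equiv.swap (0 : Fin 6) 1) 5 = 5 := by decide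
  simp only [pr, c1, c2, Function.comp, h0, h1, h2, h3, h4, h5]
  rw [Finset.pair_comm (w 1) (w 0)]
  simp

theorem core (P T : Finset (Finset (Fin 6)))
    (hT : T ⊆ Finset.powersetCard 3 Finset.univ)
    (hPc : P.card ≤ 4) (hP : P ⊆ Finset.powersetCard 2 Finset.univ) (hTc : T.card ≤ 2)
    (h : ∀ m, (∀ p ∈ pr (MT m), p ∉ P) → (∃ t ∈ c1 (MT m), t ∈ T) ∧ (∃ t ∈ c2 (MT m), t ∈ T)) :
    ∃ A ∈ Finset.powersetCard 3 (Finset.univ : Finset (Fin 6)), T = {A, Aᶜ} := by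
  classical
  have hS : 3 ≤ (Finset.univ.filter (fun m => ∀ p ∈ pr (MT m), p ∉ P)).card := by
    have h1 := Finset.card_biUnion_le_card_mul P
      (fun p => Finset.univ.filter (fun m => p ∈ pr (MT m))) 3 (fun p hp => pr_deg p (hP hp))
    have h2 := Finset.card_filter_add_card_filter_not (s := (Finset.univ : Finset (Fin 15)))
      (fun m => ∀ p ∈ pr (MT m), p ∉ P)
    have h3 : (Finset.univ.filter (fun m => ¬ ∀ p ∈ pr (MT m), p ∉ P)) ⊆
        P.biUnion (fun p => Finset.univ.filter (fun m => p ∈ pr (MT m))) := by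
      intro m hm
      simp only [Finset.mem_filter, Finset.mem_univ, true_and, Finset.mem_biUnion] at hm ⊢
      push Not at hm
      obtain ⟨p, a, b⟩ := hm
      exact ⟨p, b, a⟩
    have h4 := Finset.card_le_card h3
    simp only [Finset.card_univ, Fintype.card_fin] at h2
    omega
  have hR : 3 ≤ (Finset.univ.filter (fun m => (∃ t ∈ c1 (MT m), t ∈ T) ∧
      (∃ t ∈ c2 (MT m), t ∈ T))).card := by
    refine hS.trans (Finset.card_le_card ?_)
    intro m hm
    simp only [Finset.mem_filter, Finset.mem_univ, true_and] at hm ⊢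
    exact h m hm
  have main : ∀ A B, T = {A, B} → B = Aᶜ := by
    rintro A B rfl
    refine key A (hT (by simp)) B (hT (by simp)) (hR.trans (Finset.card_le_card ?_))
    intro m hm
    simp only [Finset.mem_filter, Finset.mem_univ, true_and, Finset.mem_insert,
      Finset.mem_singleton] at hm ⊢
    obtain ⟨⟨t, ht, ht'⟩, ⟨s, hs, hs'⟩⟩ := hm
    refine ⟨?_, ?_⟩
    · rcases ht' with rfl | rfl <;> simp [ht]
    · rcases hs' with rfl | rfl <;> simp [hs]
  have : T.card = 0 ∨ T.card = 1 ∨ T.card = 2 := by omega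
  rcases this with h0 | h0 | h0
  · rw [Finset.card_eq_zero] at h0
    subst h0
    simp at hR
  · obtain ⟨A, rfl⟩ := Finset.card_eq_one.1 h0
    exact ⟨A, hT (by simp), by rw [← main A A (by simp)]; simp⟩
  · obtain ⟨A, B, -, rfl⟩ := Finset.card_eq_two.1 h0
    exact ⟨A, hT (by simp), by rw [← main A B rfl]⟩

/-- If a Fano-free hypergraph on `7` vertices has a vertex `v` of degree at least `11`
with at least `18` edges avoiding `v`, then `H ∖ v` is isomorphic to `B_6`. -/
theorem induced_B6 (E : Finset (Finset (Fin 7))) (h3 : ∀ e ∈ E, e.card = 3)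
    (hF : ¬ ContainsFano E) (v : Fin 7)
    (hdeg : 11 ≤ (E.filter (fun e => v ∈ e)).card)
    (hrest : 18 ≤ (E.filter (fun e => v ∉ e)).card) :
    ∃ X Y : Finset (Fin 7), Disjoint X Y ∧ X ∪ Y = Finset.univ \ {v} ∧
      X.card = 3 ∧ Y.card = 3 ∧
      ∀ e : Finset (Fin 7), e.card = 3 → v ∉ e →
        (e ∈ E ↔ (e ∩ X).Nonempty ∧ (e ∩ Y).Nonempty) := by
  classical
  set Q2 := Finset.powersetCard 2 (Finset.univ : Finset (Fin 6)) with hQ2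
  set Q3 := Finset.powersetCard 3 (Finset.univ : Finset (Fin 6)) with hQ3
  have c2' : Q2.card = 15 := by decide
  have c3' : Q3.card = 20 := by decide
  have inj := Fin.succAbove_right_injective (p := v)
  have hp2 : 11 ≤ (Q2.filter (fun p => insert v (p.image v.succAbove) ∈ E)).card := by
    refine hdeg.trans (le_trans (Finset.card_le_card ?_)
      (Finset.card_image_le (f := fun p => insert v (p.image v.succAbove))))
    intro e he
    obtain ⟨heE, hv⟩ := Finset.mem_filter.1 he
    obtain ⟨p, hp, rfl⟩ := pull2 v e
      (Finset.mem_powersetCard.2 ⟨Finset.subset_univ _, h3 e heE⟩) hv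
    exact Finset.mem_image.2 ⟨p, Finset.mem_filter.2 ⟨hp, heE⟩, rfl⟩
  have hp3 : 18 ≤ (Q3.filter (fun p => p.image v.succAbove ∈ E)).card := by
    refine hrest.trans (le_trans (Finset.card_le_card ?_)
      (Finset.card_image_le (f := fun p => p.image v.succAbove)))
    intro e he
    obtain ⟨heE, hv⟩ := Finset.mem_filter.1 he
    obtain ⟨p, hp, rfl⟩ := pull3 v e
      (Finset.mem_powersetCard.2 ⟨Finset.subset_univ _, h3 e heE⟩) hv
    exact Finset.mem_image.2 ⟨p, Finset.mem_filter.2 ⟨hp, heE⟩, rfl⟩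
  have s2 := Finset.card_filter_add_card_filter_not (s := Q2)
    (fun p => insert v (p.image v.succAbove) ∈ E)
  have s3 := Finset.card_filter_add_card_filter_not (s := Q3)
    (fun p => p.image v.succAbove ∈ E)
  obtain ⟨A, hA, hT⟩ := core (Q2.filter (fun p => ¬ insert v (p.image v.succAbove) ∈ E))
    (Q3.filter (fun p => ¬ p.image v.succAbove ∈ E))
    (Finset.filter_subset _ _) (by omega) (Finset.filter_subset _ _) (by omega) (by
      intro m hm
      have hm' : ∀ p ∈ pr (MT m), insert v (p.image v.succAbove) ∈ E := by
        intro p hp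
        by_contra hc
        exact hm p hp (Finset.mem_filter.2 ⟨pr_two m p hp, hc⟩)
      constructor
      · by_contra hc
        push Not at hc
        refine hF (fano_of E v (MT m) (MT_inj m) hm' ?_)
        intro p hp
        by_contra hq
        exact hc p hp (Finset.mem_filter.2 ⟨c_three m p (Finset.mem_union_left _ hp), hq⟩)
      · by_contra hc
        push Not at hc
        obtain ⟨e1, e2⟩ := swap_eqs (MT m)
        refine hF (fano_of E v (MT m ∘ Equiv.swap 0 1)
          ((MT_inj m).comp (Equiv.injective _)) (by rwa [e1]) ?_)
        rw [e2]
        intro p hp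
        by_contra hq
        exact hc p hp (Finset.mem_filter.2 ⟨c_three m p (Finset.mem_union_right _ hp), hq⟩))
  have hAc : A.card = 3 := (Finset.mem_powersetCard.1 hA).2
  refine ⟨A.image v.succAbove, Aᶜ.image v.succAbove, ?_, ?_, ?_, ?_, ?_⟩
  · rw [Finset.disjoint_image inj]
    exact disjoint_compl_right
  · rw [← Finset.image_union, Finset.union_compl]
    ext x
    simp
  · rw [Finset.card_image_of_injective _ inj, hAc]
  · rw [Finset.card_image_of_injective _ inj, Finset.card_compl, hAc]
    simp
  · intro e he hv
    obtain ⟨p, hp, rfl⟩ := pull3 v e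
      (Finset.mem_powersetCard.2 ⟨Finset.subset_univ _, he⟩) hv
    rw [← Finset.image_inter _ _ inj, ← Finset.image_inter _ _ inj, Finset.image_nonempty,
      Finset.image_nonempty, ← fin_sep p hp A hA]
    have hmem : p ∈ Q3.filter (fun p => ¬ p.image v.succAbove ∈ E) ↔ p ∈ ({A, Aᶜ} : Finset _) := by
      rw [hT]
    rw [Finset.mem_filter, Finset.mem_insert, Finset.mem_singleton] at hmem
    tauto
end

section
/- Let H be a 3-uniform hypergraph on 8 vertices not containing the Fano plane. If H contains a complete 3-uniform hypergraph on 6 vertices (i.e., some 6-element set of vertices all of whose 3-element subsets are edges of H), then H has at most 46 edges; in particular fewer than b(8) = 48 edges. -/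
/-- The seven vertices of the Fano plane for apex `p` and round `i` of the
one-factorization of `K_6` on `{0,…,5}`. -/
def fanoVerts (p : Fin 2) (i : Fin 5) : Fin 7 → Fin 8 :=
  let c : ℕ → Fin 8 := fun k => ⟨(i.val + k) % 5, by omega⟩
  ![⟨6 + p.val, by omega⟩, 5, c 0, c 2, c 1, c 4, c 3]

/-- The three lines through the apex. -/
def apexLines (q : Fin 2 × Fin 5) : Finset (Finset (Fin 8)) :=
  let v := fanoVerts q.1 q.2
  {{v 0, v 1, v 2}, {v 0, v 4, v 5}, {v 0, v 3, v 6}}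

set_option maxRecDepth 10000

lemma fanoVerts_inj : ∀ p i, Function.Injective (fanoVerts p i) := by decide

lemma fanoVerts_lt : ∀ p i, ∀ j : Fin 7, j ≠ 0 → (fanoVerts p i j).val < 6 := by decide

lemma apexLines_card : ∀ q, ∀ t ∈ apexLines q, t.card = 3 := by decide

lemma apexLines_disj : ∀ q r, q ≠ r → Disjoint (apexLines q) (apexLines r) := by decide

lemma exists_perm (K : Finset (Fin 8)) (hK : K.card = 6) :
    ∃ σ : Equiv.Perm (Fin 8), ∀ j : Fin 8, j.val < 6 → σ j ∈ K := by
  have hc : Fintype.card {x : Fin 8 // x.val < 6} = Fintype.card {x : Fin 8 // x ∈ K} := by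
    rw [Fintype.card_coe, hK]; decide
  let e := Fintype.equivOfCardEq hc
  exact ⟨e.extendSubtype, fun j hj => e.extendSubtype_mem j hj⟩

lemma exists_nonedge (E : Finset (Finset (Fin 8)))
    (hF : ¬ ContainsFano E) (K : Finset (Fin 8))
    (hclique : ∀ e ⊆ K, e.card = 3 → e ∈ E) (σ : Equiv.Perm (Fin 8))
    (hσ : ∀ j : Fin 8, j.val < 6 → σ j ∈ K) (q : Fin 2 × Fin 5) :
    ∃ t ∈ apexLines q, t.map σ.toEmbedding ∉ E := by
  by_contra! h
  have hinj : Function.Injective (fun j => σ (fanoVerts q.1 q.2 j)) :=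
    σ.injective.comp (fanoVerts_inj q.1 q.2)
  have hk : ∀ j : Fin 7, j ≠ 0 → σ (fanoVerts q.1 q.2 j) ∈ K :=
    fun j hj => hσ _ (fanoVerts_lt _ _ j hj)
  have key : ∀ a b c : Fin 7, a ≠ 0 → b ≠ 0 → c ≠ 0 → a ≠ b → a ≠ c → b ≠ c →
      ({σ (fanoVerts q.1 q.2 a), σ (fanoVerts q.1 q.2 b), σ (fanoVerts q.1 q.2 c)} :
        Finset (Fin 8)) ∈ E := by
    intro a b c ha hb hc hab hac hbc
    apply hclique
    · intro x hx
      simp only [Finset.mem_insert, Finset.mem_singleton] at hx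
      rcases hx with rfl | rfl | rfl
      exacts [hk _ ha, hk _ hb, hk _ hc]
    · exact Finset.card_eq_three.2 ⟨_, _, _, fun h => hab (hinj h), fun h => hac (hinj h),
        fun h => hbc (hinj h), rfl⟩
  simp only [apexLines, Finset.mem_insert, Finset.mem_singleton, forall_eq_or_imp, forall_eq,
    Finset.map_insert, Finset.map_singleton, Equiv.coe_toEmbedding] at h
  exact hF ⟨_, hinj, h.1, key 2 3 4 (by decide) (by decide) (by decide) (by decide) (by decide)
      (by decide), h.2.1, h.2.2,
    key 2 5 6 (by decide) (by decide) (by decide) (by decide) (by decide) (by decide),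
    key 1 4 6 (by decide) (by decide) (by decide) (by decide) (by decide) (by decide),
    key 1 3 5 (by decide) (by decide) (by decide) (by decide) (by decide) (by decide)⟩

/-- A Fano-free hypergraph on `8` vertices containing a complete `3`-uniform hypergraph
on `6` vertices has at most `46 < b 8 = 48` edges. -/
theorem K6_implies_few_edges (E : Finset (Finset (Fin 8))) (h3 : ∀ e ∈ E, e.card = 3)
    (hF : ¬ ContainsFano E) (K : Finset (Fin 8)) (hK : K.card = 6)
    (hclique : ∀ e ⊆ K, e.card = 3 → e ∈ E) :
    E.card ≤ 46 ∧ E.card < b 8 := by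
  obtain ⟨σ, hσ⟩ := exists_perm K hK
  choose f hf hfE using exists_nonedge E hF K hclique σ hσ
  have hfinj : Function.Injective f := by
    intro q r hqr
    by_contra hne
    exact Finset.disjoint_left.1 (apexLines_disj q r hne) (hf q) (hqr ▸ hf r)
  let g : Fin 2 × Fin 5 → Finset (Fin 8) := fun q => (f q).map σ.toEmbedding
  have hg : Function.Injective g := (Finset.map_injective _).comp hfinj
  have hN : (Finset.univ.image g).card = 10 := by
    rw [Finset.card_image_of_injective _ hg]; rfl
  have hd : Disjoint E (Finset.univ.image g) := by
    rw [Finset.disjoint_left]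
    intro e he hi
    obtain ⟨q, -, rfl⟩ := Finset.mem_image.1 hi
    exact hfE q he
  have hsub : E ∪ Finset.univ.image g ⊆ Finset.powersetCard 3 (Finset.univ : Finset (Fin 8)) := by
    intro e he
    rw [Finset.mem_powersetCard]
    refine ⟨Finset.subset_univ _, ?_⟩
    rcases Finset.mem_union.1 he with he | he
    · exact h3 e he
    · obtain ⟨q, -, rfl⟩ := Finset.mem_image.1 he
      simpa [g] using apexLines_card q _ (hf q)
  have hc := Finset.card_le_card hsub
  rw [Finset.card_union_of_disjoint hd, hN, Finset.card_powersetCard, Finset.card_univ,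
    Fintype.card_fin] at hc
  have h56 : Nat.choose 8 3 = 56 := by decide
  have hb : b 8 = 48 := by decide
  omega
end

section
/- Suppose n ≥ 6 is even and H is a 3-uniform hypergraph on n vertices such that for every vertex v of H the induced subhypergraph on the remaining n−1 vertices is isomorphic to B_{n−1}. Then H is isomorphic to B_n; that is, there is a partition of the vertex set of H into two sets of size n/2 such that the edges of H are exactly the triples meeting both parts. -/
/-- If `n ≥ 6` is even and every vertex-deleted subhypergraph of `H` is isomorphic to
`B_{n-1}`, then `H` is isomorphic to `B_n`. -/
theorem B_n_of_all_vertex_deleted (n : ℕ) (hn : 6 ≤ n) (hEven : Even n)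
    (E : Finset (Finset (Fin n))) (h3 : ∀ e ∈ E, e.card = 3)
    (hB : ∀ v : Fin n, ∃ X Y : Finset (Fin n), Disjoint X Y ∧
      X ∪ Y = Finset.univ \ {v} ∧ ((X.card : ℤ) - (Y.card : ℤ)).natAbs ≤ 1 ∧
      ∀ e : Finset (Fin n), e.card = 3 → v ∉ e →
        (e ∈ E ↔ (e ∩ X).Nonempty ∧ (e ∩ Y).Nonempty)) :
    ∃ X Y : Finset (Fin n), Disjoint X Y ∧ X ∪ Y = Finset.univ ∧
      X.card = n / 2 ∧ Y.card = n / 2 ∧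
      ∀ e : Finset (Fin n), e.card = 3 →
        (e ∈ E ↔ (e ∩ X).Nonempty ∧ (e ∩ Y).Nonempty) := by
  classical
  obtain ⟨k, hk⟩ := hEven
  have hX : ∀ v : Fin n, ∃ X : Finset (Fin n), X.card = k ∧ v ∉ X ∧
      ∀ e : Finset (Fin n), e.card = 3 → v ∉ e →
        (e ∈ E ↔ (e ∩ X).Nonempty ∧ (e ∩ Xᶜ).Nonempty) := by
    intro v
    obtain ⟨X, Y, hd, hu, hc, he⟩ := hB v
    have hcard : X.card + Y.card = n - 1 := by
      rw [← Finset.card_union_of_disjoint hd, hu, Finset.card_sdiff_of_subset (by simp)]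
      simp
    have hm : ∀ x, x ∈ X ∨ x ∈ Y ↔ x ≠ v := by
      intro x
      rw [← Finset.mem_union, hu]; simp
    have hdis : ∀ x, x ∈ X → x ∉ Y := fun x hx hy => Finset.disjoint_left.mp hd hx hy
    have hYX : ∀ e : Finset (Fin n), v ∉ e → e ∩ Y = e ∩ Xᶜ := by
      intro e hve
      ext x
      simp only [Finset.mem_inter, Finset.mem_compl]
      grind
    have hXY : ∀ e : Finset (Fin n), v ∉ e → e ∩ X = e ∩ Yᶜ := by
      intro e hve
      ext x
      simp only [Finset.mem_inter, Finset.mem_compl]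
      grind
    have hv : v ∉ X ∧ v ∉ Y := by
      have := hm v
      grind
    have hor : X.card = k ∨ Y.card = k := by omega
    rcases hor with h | h
    · refine ⟨X, h, hv.1, fun e h1 h2 => ?_⟩
      rw [he e h1 h2, hYX e h2]
    · refine ⟨Y, h, hv.2, fun e h1 h2 => ?_⟩
      rw [he e h1 h2, hXY e h2, and_comm]
  choose X hXc hXv hXe using hX
  have hnon : ∀ v, ∀ e : Finset (Fin n), e.card = 3 → e ⊆ X v → e ∉ E := by
    intro v e h1 h2 h
    rw [hXe v e h1 (fun h' => hXv v (h2 h'))] at h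
    obtain ⟨x, hx⟩ := h.2
    simp only [Finset.mem_inter, Finset.mem_compl] at hx
    exact hx.2 (h2 hx.1)
  have key : ∀ v u, u ∉ X v → X v = X u := by
    intro v u hu
    by_cases hsub : X v ⊆ X u
    · exact Finset.eq_of_subset_of_card_le hsub (by rw [hXc, hXc])
    exfalso
    obtain ⟨b, hb, hbu⟩ := Finset.not_subset.mp hsub
    by_cases hdis : ∃ a ∈ X v, a ∈ X u
    · obtain ⟨a, ha, hau⟩ := hdis
      have hab : a ≠ b := fun h => hbu (h ▸ hau)
      obtain ⟨c, hc, hcn⟩ : ∃ c ∈ X v, c ∉ ({a, b} : Finset (Fin n)) := by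
        apply Finset.exists_mem_notMem_of_card_lt_card
        rw [Finset.card_pair hab, hXc]; omega
      simp only [Finset.mem_insert, Finset.mem_singleton, not_or] at hcn
      have h3' : ({a, b, c} : Finset (Fin n)).card = 3 :=
        Finset.card_eq_three.mpr ⟨a, b, c, hab, Ne.symm hcn.1, Ne.symm hcn.2, rfl⟩
      have hs : ({a, b, c} : Finset (Fin n)) ⊆ X v := by
        intro x hx
        simp only [Finset.mem_insert, Finset.mem_singleton] at hx
        rcases hx with rfl | rfl | rfl <;> assumption
      refine hnon v _ h3' hs ((hXe u _ h3' (fun h => hu (hs h))).mpr ⟨⟨a, ?_⟩, ⟨b, ?_⟩⟩)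
      · simp [hau]
      · simp [hbu]
    · have hd : Disjoint (X v) (X u) := Finset.disjoint_left.mpr fun a h1 h2 => hdis ⟨a, h1, h2⟩
      have h1 : (insert u (X v ∪ X u)).card = n + 1 := by
        rw [Finset.card_insert_of_notMem (by simp [hu, hXv u]), Finset.card_union_of_disjoint hd,
          hXc, hXc, hk]
      have h2 := Finset.card_le_univ (insert u (X v ∪ X u))
      rw [h1, Fintype.card_fin] at h2
      omega
  have dich : ∀ v u, X u = X v ∨ X u = (X v)ᶜ := by
    intro v u
    by_cases h : ∃ w, w ∉ X u ∧ w ∉ X v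
    · obtain ⟨w, h1, h2⟩ := h
      exact Or.inl ((key u w h1).trans (key v w h2).symm)
    · right
      symm
      apply Finset.eq_of_subset_of_card_le
      · intro w hw
        rw [Finset.mem_compl] at hw
        by_contra h'
        exact h ⟨w, h', hw⟩
      · rw [Finset.card_compl, hXc, hXc, Fintype.card_fin]; omega
  let v0 : Fin n := ⟨0, by omega⟩
  refine ⟨X v0, (X v0)ᶜ, disjoint_compl_right, Finset.union_compl _, ?_, ?_, ?_⟩
  · rw [hXc]; omega
  · rw [Finset.card_compl, hXc, Fintype.card_fin]; omega
  · intro e he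
    obtain ⟨u, -, hu⟩ : ∃ u ∈ (Finset.univ : Finset (Fin n)), u ∉ e := by
      apply Finset.exists_mem_notMem_of_card_lt_card
      rw [he, Finset.card_univ, Fintype.card_fin]; omega
    rw [hXe u e he hu]
    rcases dich v0 u with h | h
    · rw [h]
    · rw [h, compl_compl, and_comm]
end
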